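/- Let Q(x) = Σ_{ω∈Ω} q_ω e^{2πi x ω} be a Dirichlet series with q_ω ∈ ℂ, Σ_{ω∈Ω} |q_ω| < ∞, Ω a bounded countable subset of ℝ, whose entire extension Q(z) = Σ_{ω∈Ω} q_ω e^{2πi z ω} is not identically zero and has only real zeros, and let A = {a_n} be the multiset of zeros of Q counted with multiplicity. Then the Fourier transform of μ_A = Σ_n δ_{a_n} is a pure point measure μ̂_A = Σ_{γ∈Γ} b_γ δ_γ which satisfies Σ_{γ∈Γ, 0<γ<1} |b_γ|/γ < ∞ and log |μ̂_A|(B(0,r)) = o(r) as r → ∞. -/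

import Mathlib

open MeasureTheory Metric Filter Topology Complex SchwartzMap Bornology
open scoped ENNReal

noncomputable section

/-- A continuous function `g` is *Bohr almost periodic* if for every `ε > 0` its set of
`ε`-almost periods is relatively dense. -/
def IsBohrAP {V : Type*} [SeminormedAddCommGroup V] (g : V → ℂ) : Prop :=
  Continuous g ∧ ∀ ε : ℝ, 0 < ε → ∃ L : ℝ, 0 < L ∧ ∀ x : V, ∃ τ : V,
    dist τ x < L ∧ ∀ y : V, ‖g (y + τ) - g y‖ < ε

/-- A pure point complex measure on `V`, described by its (countably supported) mass function. -/
structure PPM (V : Type*) where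
  mass : V → ℂ
  countable : (Function.support mass).Countable

namespace PPM

variable {V : Type*}

/-- The total variation of a pure point measure, evaluated on a set. -/
def var (μ : PPM V) (A : Set V) : ℝ≥0∞ := ∑' x : A, (‖μ.mass x‖₊ : ℝ≥0∞)

/-- Pairing of a pure point measure with a test function: `∫ φ dμ = Σ_x μ{x}·φ(x)`. -/
def pair (μ : PPM V) (φ : V → ℂ) : ℂ := ∑' x, μ.mass x * φ x

/-- Convolution `(μ ⋆ ψ)(t) = ∫ ψ(t - x) dμ(x)`. -/
def conv [SubtractionMonoid V] (μ : PPM V) (ψ : V → ℂ) (t : V) : ℂ :=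
  ∑' x, μ.mass x * ψ (t - x)

end PPM

/-- Local finiteness of a pure point measure on `ℝ`. -/
def PPM.locFinite (μ : PPM ℝ) : Prop := ∀ r : ℝ, μ.var (ball 0 r) < ⊤

/-- The measure is a temperate distribution: it pairs (absolutely) with every Schwartz
function. -/
def PPM.temperate (μ : PPM ℝ) : Prop :=
  ∀ φ : SchwartzMap ℝ ℂ, Summable fun x => μ.mass x * φ x

/-- `ν` is the distributional Fourier transform of `μ`: `μ(φ̂) = ν(φ)` on test functions. -/
def IsFT (μ ν : PPM ℝ) : Prop :=
  ∀ φ : SchwartzMap ℝ ℂ, HasCompactSupport φ →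
    μ.pair ⇑(FourierTransform.fourierCLE ℂ (SchwartzMap ℝ ℂ) φ) = ν.pair ⇑φ

/-- The measure is integer-valued: `μ = Σ_n δ_{a_n}` for a multiset `A = {a_n}`, the mass of
each point being its multiplicity. -/
def PPM.natValued (μ : PPM ℝ) : Prop := ∀ x : ℝ, ∃ k : ℕ, μ.mass x = k

/-- The value at `z ∈ ℂ` of (the entire extension of) the Dirichlet series
`Σ_ω q_ω e^{2πi z ω}`. -/
def dserC (q : ℕ → ℂ) (ω : ℕ → ℝ) (z : ℂ) : ℂ :=
  ∑' i : ℕ, q i * Complex.exp (2 * Real.pi * Complex.I * z * (ω i : ℂ))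

/-- `μ` is the counting measure of the zero multiset of the entire function `Q`: the mass of
`μ` at each real point `x` is the multiplicity of `x` as a zero of `Q`. -/
def IsZeroCounting (Q : ℂ → ℂ) (μ : PPM ℝ) : Prop :=
  ∀ x : ℝ, ∃ (k : ℕ) (g : ℂ → ℂ), μ.mass x = k ∧ (∀ z, AnalyticAt ℂ g z) ∧ g x ≠ 0 ∧
    ∀ z : ℂ, Q z = (z - (x : ℂ)) ^ k * g z

/-!
Off the real axis the logarithmic derivative `L = Q'/Q` is, on every horizontal line, an absolutely
convergent series of waves `e^{2πiγz}`: Wiener's lemma inverts the almost periodic function `Q` on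
the line, and Cauchy's theorem together with Bohr's mean values shows that the coefficients are the
same on all lines of one half-plane. The spectrum of `Q` has a smallest frequency `λ`: otherwise,
once its infimum is moved to `0`, all the waves of `Q` decay along `iy`, while their frequencies are
arbitrarily small, so that Harnack's inequality and Phragmén–Lindelöf bound `|Q(iy)|` from below.
Dividing by `e^{2πiλz}`, Wiener's lemma near `i∞` gives `Q = q e^{2πiλz} exp (∑ l_γ e^{2πiγz})`
with `γ ≥ 0` and `∑ |l_γ| < ∞`, so the coefficients of `L` at small positive `γ` are `2πiγ l_γ`, and
`∑ |c_γ| / γ < ∞` over `0 < γ < 1`.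

Now integrate `L ψ` over the boundary of `[x₁, x₂] × [-1, 1]`, where `x₁, x₂` are translates of a
fixed zero-free vertical line by almost periods of `Q`, so that `L` stays bounded on the vertical
sides. Letting `x₁ → -∞` and `x₂ → ∞`, `2πi ∑ ψ(a_n)` becomes the difference of the integrals of
`L ψ` over `Im z = -1` and `Im z = 1`. For `ψ` the Fourier–Laplace transform of `φ`, Fourier
inversion on the two lines turns these integrals into `∑ d_γ φ(γ)` and `∑ c_γ φ(γ)`, hence
`μ̂ = (2πi)⁻¹ ∑ (d_γ - c_γ) δ_γ`. The absolute convergence on every line, however close to the real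
axis, is the growth condition.
-/

/-! ### Waves and absolutely convergent wave expansions -/

/-- The exponential `z ↦ e^{2πiγz}` of real frequency `γ`, as an entire function of `z`. -/
def wave (γ : ℝ) (z : ℂ) : ℂ := Complex.exp (2 * Real.pi * Complex.I * z * (γ : ℂ))

lemma norm_wave (γ : ℝ) (z : ℂ) : ‖wave γ z‖ = Real.exp (-(2 * Real.pi * γ * z.im)) := by
  rw [wave, Complex.norm_exp]
  congr 1
  simp only [mul_re, mul_im, re_ofNat, im_ofNat, ofReal_re, ofReal_im, I_re, I_im]
  ring

lemma norm_wave_ofReal (γ x : ℝ) : ‖wave γ (x : ℂ)‖ = 1 := by simp [norm_wave]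

lemma norm_wave_le_one {γ : ℝ} {z : ℂ} (hγ : 0 ≤ γ) (hz : 0 ≤ z.im) : ‖wave γ z‖ ≤ 1 := by
  rw [norm_wave, Real.exp_le_one_iff]
  have := Real.pi_pos
  exact neg_nonpos.2 (by positivity)

lemma wave_ne_zero (γ : ℝ) (z : ℂ) : wave γ z ≠ 0 := Complex.exp_ne_zero _

lemma wave_add_left (γ γ' : ℝ) (z : ℂ) : wave (γ + γ') z = wave γ z * wave γ' z := by
  simp only [wave, ← Complex.exp_add]
  congr 1
  push_cast
  ring

lemma wave_add_right (γ : ℝ) (z w : ℂ) : wave γ (z + w) = wave γ z * wave γ w := by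
  simp only [wave, ← Complex.exp_add]
  congr 1
  ring

@[simp]
lemma wave_zero_left (z : ℂ) : wave 0 z = 1 := by simp [wave]

lemma wave_neg_left (γ : ℝ) (z : ℂ) : wave (-γ) z = (wave γ z)⁻¹ :=
  eq_inv_of_mul_eq_one_left (by rw [← wave_add_left, neg_add_cancel, wave_zero_left])

lemma wave_neg_left_eq_neg_right (γ : ℝ) (z : ℂ) : wave (-γ) z = wave γ (-z) := by
  simp only [wave]
  congr 1
  push_cast
  ring

lemma conj_wave_ofReal (γ x : ℝ) : (starRingEnd ℂ) (wave γ (x : ℂ)) = wave (-γ) (x : ℂ) := by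
  rw [wave, wave, ← Complex.exp_conj]
  congr 1
  simp only [map_mul, Complex.conj_ofReal, Complex.conj_I, map_ofNat, ofReal_neg]
  ring

lemma hasDerivAt_wave (γ : ℝ) (z : ℂ) :
    HasDerivAt (wave γ) (2 * Real.pi * I * γ * wave γ z) z := by
  have hlin : HasDerivAt (fun z : ℂ => 2 * Real.pi * Complex.I * z * (γ : ℂ))
      (2 * Real.pi * I * γ) z := by
    simpa using ((hasDerivAt_id z).const_mul (2 * Real.pi * Complex.I : ℂ)).mul_const (γ : ℂ)
  rw [mul_comm]
  exact hlin.cexp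

lemma differentiable_wave (γ : ℝ) : Differentiable ℂ (wave γ) :=
  fun z => (hasDerivAt_wave γ z).differentiableAt

@[fun_prop]
lemma continuous_wave (γ : ℝ) : Continuous (wave γ) := (differentiable_wave γ).continuous

lemma hasSum_mul_integral {ι α : Type*} [MeasurableSpace α] {m : Measure α} {c : ι → ℂ}
    {f : ι → α → ℂ} (hc : Summable fun i => ‖c i‖) {B : ℝ}
    (hf : ∀ i, Integrable (f i) m) (hB : ∀ i, ∫ a, ‖f i a‖ ∂m ≤ B) :
    HasSum (fun i => c i * ∫ a, f i a ∂m) (∫ a, ∑' i, c i * f i a ∂m) := by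
  have : Countable (Function.support c) := (Summable.of_norm hc).countable_support.to_subtype
  have hsum : Summable fun i : Function.support c => ∫ a, ‖c i * f i a‖ ∂m := by
    refine Summable.of_nonneg_of_le (fun i => by positivity) (fun i => ?_)
      ((hc.subtype (Function.support c)).mul_right B)
    simp only [norm_mul, integral_const_mul]
    exact mul_le_mul_of_nonneg_left (hB i) (norm_nonneg _)
  have key := hasSum_integral_of_summable_integral_norm
    (F := fun (i : Function.support c) a => c i * f i a) (fun i => (hf i).const_mul _) hsum
  have hsupp (a : α) : Function.support (fun i => c i * f i a) ⊆ Function.support c :=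
    fun i hi => left_ne_zero_of_mul hi
  simp_rw [integral_const_mul] at key
  rw [integral_congr_ae (.of_forall fun a => (tsum_subtype_eq_of_support_subset (hsupp a)).symm)]
  exact (hasSum_subtype_iff_of_support_subset (s := Function.support c)
    (f := fun i => c i * ∫ a, f i a ∂m) fun i hi => left_ne_zero_of_mul hi).1 key

/-- `HasWaveExpansion S X F N`: on `X`, the function `F` is the sum of an absolutely convergent
series `∑ qᵢ e^{2πi wᵢ z}` with frequencies `wᵢ ∈ S` and `∑ |qᵢ| ≤ N`. The index type is
arbitrary, so frequencies may repeat. -/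
def HasWaveExpansion (S : AddSubmonoid ℝ) (X : Set ℂ) (F : ℂ → ℂ) (N : ℝ) : Prop :=
  ∃ (ι : Type) (q : ι → ℂ) (w : ι → ℝ), (∀ i, w i ∈ S) ∧ (Summable fun i => ‖q i‖) ∧
    (∑' i, ‖q i‖) ≤ N ∧ ∀ z ∈ X, HasSum (fun i => q i * wave (w i) z) (F z)

/-- All waves with frequency in `S` are bounded by `1` on `X`. -/
def WavesBoundedOn (S : AddSubmonoid ℝ) (X : Set ℂ) : Prop := ∀ γ ∈ S, ∀ z ∈ X, ‖wave γ z‖ ≤ 1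

lemma wavesBoundedOn_nonneg : WavesBoundedOn (AddSubmonoid.nonneg ℝ) {z | 0 ≤ z.im} :=
  fun _ hγ _ hz => norm_wave_le_one hγ hz

/-- The real axis in `ℂ`. -/
def realAxis : Set ℂ := Set.range ((↑) : ℝ → ℂ)

lemma wavesBoundedOn_realAxis : WavesBoundedOn ⊤ realAxis := by
  rintro γ - _ ⟨x, rfl⟩
  exact (norm_wave_ofReal γ x).le

namespace WavesBoundedOn

variable {S : AddSubmonoid ℝ} {X : Set ℂ}

lemma norm_mul_wave_le (hB : WavesBoundedOn S X) {γ : ℝ} {z q : ℂ} (hγ : q ≠ 0 → γ ∈ S)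
    (hz : z ∈ X) : ‖q * wave γ z‖ ≤ ‖q‖ := by
  rcases eq_or_ne q 0 with rfl | hq
  · simp
  · rw [norm_mul]
    exact mul_le_of_le_one_right (norm_nonneg _) (hB γ (hγ hq) z hz)

lemma summable_norm_mul_wave (hB : WavesBoundedOn S X) {ι : Type*} {q : ι → ℂ} {w : ι → ℝ}
    (hw : ∀ i, q i ≠ 0 → w i ∈ S) (hq : Summable fun i => ‖q i‖) {z : ℂ} (hz : z ∈ X) :
    Summable fun i => ‖q i * wave (w i) z‖ :=
  .of_nonneg_of_le (fun _ => norm_nonneg _) (fun i => hB.norm_mul_wave_le (hw i) hz) hq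

end WavesBoundedOn

lemma exists_hasSum_collect {ι : Type*} {S : Set ℝ} {q : ι → ℂ} {w : ι → ℝ}
    (hw : ∀ i, w i ∈ S) (hq : Summable fun i => ‖q i‖) :
    ∃ c : ℝ → ℂ, (∀ γ, c γ ≠ 0 → γ ∈ S) ∧ (Summable fun γ => ‖c γ‖) ∧
      ∀ (f : ℝ → ℂ) (s : ℂ),
        HasSum (fun i => q i * f (w i)) s → HasSum (fun γ => c γ * f γ) s := by
  have hfib := hq.hasSum.tsum_fiberwise w
  have hle (γ : ℝ) : ‖∑' i : w ⁻¹' {γ}, q i‖ ≤ ∑' i : w ⁻¹' {γ}, ‖q i‖ :=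
    norm_tsum_le_tsum_norm (hq.subtype _)
  have hsum : Summable fun γ => ‖∑' i : w ⁻¹' {γ}, q i‖ :=
    .of_nonneg_of_le (fun _ => norm_nonneg _) hle hfib.summable
  refine ⟨fun γ => ∑' i : w ⁻¹' {γ}, q i, fun γ hγ => ?_, hsum, fun f s hf => ?_⟩
  · by_contra hγS
    have : IsEmpty (w ⁻¹' {γ}) := ⟨fun ⟨i, hi⟩ => hγS (Set.mem_singleton_iff.1 hi ▸ hw i)⟩
    exact hγ tsum_empty
  · refine (hf.tsum_fiberwise w).congr_fun fun γ => ?_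
    rw [← tsum_mul_right]
    exact tsum_congr fun i => by rw [Set.mem_singleton_iff.1 i.2]

namespace HasWaveExpansion

variable {S : AddSubmonoid ℝ} {X : Set ℂ} {F G : ℂ → ℂ} {N M : ℝ}

lemma of_coeff {c : ℝ → ℂ} (hS : ∀ γ, c γ ≠ 0 → γ ∈ S) (hc : Summable fun γ => ‖c γ‖)
    (hF : ∀ z ∈ X, HasSum (fun γ => c γ * wave γ z) (F z)) :
    HasWaveExpansion S X F (∑' γ, ‖c γ‖) := by
  refine ⟨Function.support c, fun γ => c γ, fun γ => γ, fun γ => hS _ γ.2, hc.subtype _,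
    hc.tsum_subtype_le _ _ fun _ => norm_nonneg _, fun z hz => ?_⟩
  exact (hasSum_subtype_iff_of_support_subset (f := fun γ => c γ * wave γ z)
    fun γ hγ => left_ne_zero_of_mul hγ).2 (hF z hz)

lemma exists_coeff (h : HasWaveExpansion S X F N) : ∃ c : ℝ → ℂ, (∀ γ, c γ ≠ 0 → γ ∈ S) ∧
    (Summable fun γ => ‖c γ‖) ∧ ∀ z ∈ X, HasSum (fun γ => c γ * wave γ z) (F z) := by
  obtain ⟨ι, q, w, hw, hq, -, hF⟩ := h
  obtain ⟨c, hcS, hc, hsum⟩ := exists_hasSum_collect (S := S) hw hq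
  exact ⟨c, hcS, hc, fun z hz => hsum (fun γ => wave γ z) _ (hF z hz)⟩

lemma mono (h : HasWaveExpansion S X F N) (hNM : N ≤ M) : HasWaveExpansion S X F M := by
  obtain ⟨ι, q, w, hw, hq, hN, hF⟩ := h
  exact ⟨ι, q, w, hw, hq, hN.trans hNM, hF⟩

lemma congr (h : HasWaveExpansion S X F N) (hFG : Set.EqOn F G X) : HasWaveExpansion S X G N := by
  obtain ⟨ι, q, w, hw, hq, hN, hF⟩ := h
  exact ⟨ι, q, w, hw, hq, hN, fun z hz => hFG hz ▸ hF z hz⟩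

lemma nonneg (h : HasWaveExpansion S X F N) : 0 ≤ N := by
  obtain ⟨ι, q, w, -, -, hN, -⟩ := h
  exact (tsum_nonneg fun _ => norm_nonneg _).trans hN

lemma norm_le (h : HasWaveExpansion S X F N) (hB : WavesBoundedOn S X) {z : ℂ} (hz : z ∈ X) :
    ‖F z‖ ≤ N := by
  obtain ⟨ι, q, w, hw, hq, hN, hF⟩ := h
  rw [← (hF z hz).tsum_eq]
  exact (tsum_of_norm_bounded hq.hasSum fun i =>
    hB.norm_mul_wave_le (fun _ => hw i) hz).trans hN

lemma one : HasWaveExpansion S X (fun _ => 1) 1 :=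
  ⟨Unit, fun _ => 1, fun _ => 0, fun _ => S.zero_mem, .of_finite, by simp, fun z _ => by simp⟩

lemma const_mul (h : HasWaveExpansion S X F N) (a : ℂ) :
    HasWaveExpansion S X (fun z => a * F z) (‖a‖ * N) := by
  obtain ⟨ι, q, w, hw, hq, hN, hF⟩ := h
  refine ⟨ι, fun i => a * q i, w, hw, by simpa only [norm_mul] using hq.mul_left ‖a‖, ?_,
    fun z hz => by simpa only [mul_assoc] using (hF z hz).mul_left a⟩
  simp only [norm_mul, tsum_mul_left]
  exact mul_le_mul_of_nonneg_left hN (norm_nonneg _)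

lemma mul (hB : WavesBoundedOn S X) (hF : HasWaveExpansion S X F N)
    (hG : HasWaveExpansion S X G M) : HasWaveExpansion S X (fun z => F z * G z) (N * M) := by
  have hN0 := hF.nonneg
  obtain ⟨ι, q, w, hw, hq, hN, hF⟩ := hF
  obtain ⟨κ, p, v, hv, hp, hM, hG⟩ := hG
  refine ⟨ι × κ, fun x => q x.1 * p x.2, fun x => w x.1 + v x.2,
    fun x => S.add_mem (hw _) (hv _), hq.mul_norm hp, ?_, fun z hz => ?_⟩
  · simp only [norm_mul]
    rw [← tsum_mul_tsum_of_summable_norm (f := fun i => ‖q i‖) (g := fun i => ‖p i‖)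
      (by simpa only [norm_norm] using hq) (by simpa only [norm_norm] using hp)]
    exact mul_le_mul hN hM (tsum_nonneg fun _ => norm_nonneg _) hN0
  · have hsum : Summable fun x : ι × κ => (q x.1 * wave (w x.1) z) * (p x.2 * wave (v x.2) z) :=
      summable_mul_of_summable_norm (f := fun i => q i * wave (w i) z)
        (g := fun i => p i * wave (v i) z)
        (hB.summable_norm_mul_wave (fun i _ => hw i) hq hz)
        (hB.summable_norm_mul_wave (fun i _ => hv i) hp hz)
    refine ((hF z hz).mul (hG z hz) hsum).congr_fun fun x => ?_
    rw [wave_add_left]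
    ring

lemma pow (hB : WavesBoundedOn S X) (hF : HasWaveExpansion S X F N) (k : ℕ) :
    HasWaveExpansion S X (fun z => F z ^ k) (N ^ k) := by
  induction k with
  | zero => simpa only [pow_zero] using one
  | succ k ih => simpa only [pow_succ] using mul hB ih hF

lemma hasSum {κ : Type} {Fs : κ → ℂ → ℂ} {Ns : κ → ℝ} (hB : WavesBoundedOn S X)
    (h : ∀ k, HasWaveExpansion S X (Fs k) (Ns k)) (hN : HasSum Ns M)
    (hG : ∀ z ∈ X, HasSum (fun k => Fs k z) (G z)) : HasWaveExpansion S X G M := by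
  choose ι q w hw hq hN' hF using h
  have hsum : Summable fun x : (k : κ) × ι k => ‖q x.1 x.2‖ :=
    (summable_sigma_of_nonneg fun _ => norm_nonneg _).2
      ⟨hq, .of_nonneg_of_le (fun k => tsum_nonneg fun _ => norm_nonneg _) hN' hN.summable⟩
  refine ⟨(k : κ) × ι k, fun x => q x.1 x.2, fun x => w x.1 x.2, fun x => hw _ _, hsum, ?_,
    fun z hz => ?_⟩
  · rw [hsum.tsum_sigma' hq, ← hN.tsum_eq]
    exact Summable.tsum_le_tsum hN' hsum.sigma hN.summable
  · exact HasSum.sigma_of_hasSum (hG z hz) (fun k => hF k z hz)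
      (hB.summable_norm_mul_wave (q := fun x : (k : κ) × ι k => q x.1 x.2)
        (w := fun x : (k : κ) × ι k => w x.1 x.2) (fun x _ => hw x.1 x.2) hsum hz).of_norm

lemma add (hB : WavesBoundedOn S X) (hF : HasWaveExpansion S X F N)
    (hG : HasWaveExpansion S X G M) : HasWaveExpansion S X (fun z => F z + G z) (N + M) := by
  refine hasSum (κ := Bool) (Fs := fun b => if b then F else G)
    (Ns := fun b => if b then N else M) hB (fun b => ?_) ?_ (fun z _ => ?_)
  · cases b <;> simpa
  · simpa using hasSum_fintype fun b : Bool => if b then N else M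
  · simpa using hasSum_fintype fun b : Bool => (if b then F else G) z

lemma conj (h : HasWaveExpansion ⊤ realAxis F N) :
    HasWaveExpansion ⊤ realAxis (fun z => (starRingEnd ℂ) (F z)) N := by
  obtain ⟨ι, q, w, -, hq, hN, hF⟩ := h
  refine ⟨ι, fun i => (starRingEnd ℂ) (q i), fun i => -w i, fun _ => AddSubmonoid.mem_top _,
    by simpa only [RCLike.norm_conj] using hq, by simpa only [RCLike.norm_conj] using hN, ?_⟩
  rintro _ ⟨x, rfl⟩
  refine (hF x ⟨x, rfl⟩).star.congr_fun fun i => ?_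
  rw [← conj_wave_ofReal, ← map_mul]
  rfl

end HasWaveExpansion

/-! ### Bohr coefficients -/

lemma tendsto_mean_wave (γ : ℝ) :
    Tendsto (fun T : ℝ => (1 / T : ℂ) * ∫ x in (0 : ℝ)..T, wave γ x) atTop
      (𝓝 (if γ = 0 then 1 else 0)) := by
  split_ifs with h
  · subst h
    refine tendsto_const_nhds.congr' ?_
    filter_upwards [eventually_gt_atTop 0] with T hT
    have : (T : ℂ) ≠ 0 := by exact_mod_cast hT.ne'
    simp [this]
  · have hc : (2 * Real.pi * I * γ : ℂ) ≠ 0 := by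
      simp [Real.pi_ne_zero, h]
    have hlim : Tendsto (fun T : ℝ => T⁻¹ * (2 / ‖(2 * Real.pi * I * γ : ℂ)‖)) atTop (𝓝 0) := by
      simpa only [zero_mul] using
        (tendsto_inv_atTop_zero (𝕜 := ℝ)).mul_const (2 / ‖(2 * Real.pi * I * γ : ℂ)‖)
    refine squeeze_zero_norm' ?_ hlim
    filter_upwards [eventually_gt_atTop 0] with T hT
    have hwave (x : ℝ) : wave γ x = Complex.exp ((2 * Real.pi * I * γ) * x) := by
      rw [wave]
      congr 1
      ring
    simp_rw [hwave]
    rw [integral_exp_mul_complex hc, norm_mul, norm_div _ (2 * Real.pi * I * γ : ℂ), ← hwave,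
      ← hwave, one_div, norm_inv, norm_real, Real.norm_of_nonneg hT.le]
    gcongr
    refine (norm_sub_le _ _).trans ?_
    rw [norm_wave_ofReal, norm_wave_ofReal]
    norm_num

lemma norm_mean_le {f : ℝ → ℂ} {K T : ℝ} (hT : 0 < T) (hf : ∀ x, ‖f x‖ ≤ K) :
    ‖(1 / T : ℂ) * ∫ x in (0 : ℝ)..T, f x‖ ≤ K := by
  have hint : ‖∫ x in (0 : ℝ)..T, f x‖ ≤ K * |T - 0| :=
    intervalIntegral.norm_integral_le_of_norm_le_const fun x _ => hf x
  rw [sub_zero, abs_of_pos hT] at hint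
  rw [norm_mul, one_div, norm_inv, norm_real, Real.norm_of_nonneg hT.le, inv_mul_le_iff₀ hT,
    mul_comm]
  exact hint

section BohrCoefficients

variable {c : ℝ → ℂ} {f : ℝ → ℂ}

lemma hasSum_mean_mul_wave (hc : Summable fun γ => ‖c γ‖)
    (hf : ∀ x : ℝ, HasSum (fun γ => c γ * wave γ x) (f x)) (γ₀ : ℝ) {T : ℝ} (hT : 0 ≤ T) :
    HasSum (fun γ => c γ * ((1 / T : ℂ) * ∫ x in (0 : ℝ)..T, wave (γ - γ₀) x))
      ((1 / T : ℂ) * ∫ x in (0 : ℝ)..T, f x * wave (-γ₀) x) := by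
  have hint := hasSum_mul_integral (m := volume.restrict (Set.Ioc 0 T)) hc (B := T)
    (f := fun γ (x : ℝ) => wave (γ - γ₀) x)
    (fun γ => (((continuous_wave (γ - γ₀)).comp continuous_ofReal).integrableOn_Icc).mono_set
      Set.Ioc_subset_Icc_self)
    (fun γ => by simp [norm_wave_ofReal, hT])
  have hf' (x : ℝ) : (∑' γ, c γ * wave (γ - γ₀) x) = f x * wave (-γ₀) x := by
    rw [← (hf x).tsum_eq, ← tsum_mul_right]
    exact tsum_congr fun γ => by rw [sub_eq_add_neg, wave_add_left, mul_assoc]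
  simp_rw [hf'] at hint
  simp_rw [intervalIntegral.integral_of_le hT]
  exact (hint.mul_left (1 / T : ℂ)).congr_fun fun γ => by ring

lemma tendsto_mean_mul_wave_neg (hc : Summable fun γ => ‖c γ‖)
    (hf : ∀ x : ℝ, HasSum (fun γ => c γ * wave γ x) (f x)) (γ₀ : ℝ) :
    Tendsto (fun T : ℝ => (1 / T : ℂ) * ∫ x in (0 : ℝ)..T, f x * wave (-γ₀) x) atTop
      (𝓝 (c γ₀)) := by
  have hlim := tendsto_tsum_of_dominated_convergence (𝓕 := (atTop : Filter ℝ))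
    (f := fun T γ => c γ * ((1 / T : ℂ) * ∫ x in (0 : ℝ)..T, wave (γ - γ₀) x)) hc
    (fun γ => (tendsto_mean_wave (γ - γ₀)).const_mul _) (by
      filter_upwards [eventually_gt_atTop 0] with T hT γ
      rw [norm_mul]
      exact mul_le_of_le_one_right (norm_nonneg _)
        (norm_mean_le hT fun x => (norm_wave_ofReal _ _).le))
  have hval : (∑' γ, c γ * (if γ - γ₀ = 0 then 1 else 0)) = c γ₀ := by
    rw [tsum_eq_single γ₀ fun γ hγ => by simp [sub_ne_zero.mpr hγ]]
    simp
  rw [hval] at hlim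
  refine hlim.congr' ?_
  filter_upwards [eventually_ge_atTop 0] with T hT
  exact (hasSum_mean_mul_wave hc hf γ₀ hT).tsum_eq

lemma norm_coeff_le (hc : Summable fun γ => ‖c γ‖)
    (hf : ∀ x : ℝ, HasSum (fun γ => c γ * wave γ x) (f x)) {K : ℝ} (hK : ∀ x, ‖f x‖ ≤ K)
    (γ₀ : ℝ) : ‖c γ₀‖ ≤ K := by
  refine le_of_tendsto (tendsto_mean_mul_wave_neg hc hf γ₀).norm ?_
  filter_upwards [eventually_gt_atTop 0] with T hT
  exact norm_mean_le hT fun x => by rw [norm_mul, norm_wave_ofReal, mul_one]; exact hK x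

end BohrCoefficients

/-! ### Wiener's lemma -/

section TrigonometricPolynomial

variable (s : Finset ℝ) (p : ℝ → ℂ)

/-- The real numbers `∑ nⱼ j` with `j ∈ s` and natural numbers `nⱼ ≤ k`, which contain the
frequencies of the `k`-th power of a trigonometric polynomial with frequencies in `s`. -/
def frequencyLattice (k : ℕ) : Finset ℝ :=
  (Fintype.piFinset fun _ : s => Finset.range (k + 1)).image fun n => ∑ j : s, (n j : ℝ) * (j : ℝ)

lemma card_frequencyLattice_le (k : ℕ) : (frequencyLattice s k).card ≤ (k + 1) ^ s.card :=
  Finset.card_image_le.trans (by simp [Fintype.card_piFinset])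

lemma zero_mem_frequencyLattice (k : ℕ) : 0 ∈ frequencyLattice s k :=
  Finset.mem_image.2 ⟨0, by simp, by simp⟩

variable {s} in
lemma add_mem_frequencyLattice {k : ℕ} {a b : ℝ} (ha : a ∈ frequencyLattice s k) (hb : b ∈ s) :
    a + b ∈ frequencyLattice s (k + 1) := by
  classical
  obtain ⟨n, hn, rfl⟩ := Finset.mem_image.1 ha
  simp only [Fintype.mem_piFinset, Finset.mem_range] at hn
  refine Finset.mem_image.2 ⟨fun j => n j + if j = ⟨b, hb⟩ then 1 else 0, ?_, ?_⟩
  · simp only [Fintype.mem_piFinset, Finset.mem_range]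
    intro j
    have := hn j
    split_ifs <;> omega
  · simp [add_mul, Finset.sum_add_distrib]

lemma exists_sum_wave_pow_eq (k : ℕ) : ∃ d : ℝ → ℂ, ∀ z : ℂ,
    (∑ γ ∈ s, p γ * wave γ z) ^ k = ∑ γ ∈ frequencyLattice s k, d γ * wave γ z := by
  classical
  induction k with
  | zero =>
    refine ⟨fun γ => if γ = 0 then 1 else 0, fun z => ?_⟩
    rw [Finset.sum_eq_single_of_mem 0 (zero_mem_frequencyLattice s 0)
      fun γ _ hγ => by simp only [if_neg hγ, zero_mul]]
    simp
  | succ k ih =>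
    obtain ⟨d, hd⟩ := ih
    refine ⟨fun η => ∑ x ∈ frequencyLattice s k ×ˢ s with x.1 + x.2 = η, d x.1 * p x.2,
      fun z => ?_⟩
    have hmaps : ∀ x ∈ frequencyLattice s k ×ˢ s, x.1 + x.2 ∈ frequencyLattice s (k + 1) :=
      fun x hx => add_mem_frequencyLattice (Finset.mem_product.1 hx).1 (Finset.mem_product.1 hx).2
    rw [pow_succ, hd, Finset.sum_mul_sum, ← Finset.sum_product',
      ← Finset.sum_fiberwise_of_maps_to hmaps]
    refine Finset.sum_congr rfl fun η _ => ?_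
    rw [Finset.sum_mul]
    refine Finset.sum_congr rfl fun x hx => ?_
    rw [← (Finset.mem_filter.mp hx).2, wave_add_left]
    ring

end TrigonometricPolynomial

namespace HasWaveExpansion

variable {F : ℂ → ℂ} {N ρ r K : ℝ}

lemma sum_wave {X : Set ℂ} (s : Finset ℝ) (p : ℝ → ℂ) :
    HasWaveExpansion ⊤ X (fun z => ∑ γ ∈ s, p γ * wave γ z) (∑ γ ∈ s, ‖p γ‖) := by
  refine ⟨s, fun γ => p γ, fun γ => γ, fun _ => AddSubmonoid.mem_top _, .of_finite, ?_,
    fun z _ => ?_⟩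
  · exact (Finset.tsum_subtype s fun γ => ‖p γ‖).le
  · exact Finset.hasSum s fun γ => p γ * wave γ z

/-- A trigonometric polynomial has only polynomially many frequencies in its powers, and each
Bohr coefficient is at most the supremum. -/
lemma sum_wave_pow (s : Finset ℝ) (p : ℝ → ℂ) (hK0 : 0 ≤ K)
    (hK : ∀ x : ℝ, ‖∑ γ ∈ s, p γ * wave γ x‖ ≤ K) (k : ℕ) :
    HasWaveExpansion ⊤ realAxis (fun z => (∑ γ ∈ s, p γ * wave γ z) ^ k)
      ((k + 1) ^ s.card * K ^ k) := by
  classical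
  obtain ⟨d, hd⟩ := exists_sum_wave_pow_eq s p k
  set T := frequencyLattice s k
  have hc (γ : ℝ) (hγ : γ ∈ T) : ‖d γ‖ ≤ K ^ k := by
    have hsupp (γ : ℝ) (hγ : γ ∉ T) : (if γ ∈ T then d γ else 0) = 0 := if_neg hγ
    have hle := norm_coeff_le (c := fun γ => if γ ∈ T then d γ else 0)
      (f := fun x : ℝ => (∑ γ ∈ s, p γ * wave γ x) ^ k)
      (summable_of_ne_finset_zero (s := T) fun γ hγ => by rw [hsupp γ hγ, norm_zero])
      (fun x => by
        simpa only [hd, ite_mul, zero_mul, Finset.sum_ite_mem, Finset.inter_self] using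
          hasSum_sum_of_ne_finset_zero (s := T)
            (f := fun γ => (if γ ∈ T then d γ else 0) * wave γ x)
            fun γ hγ => by rw [hsupp γ hγ, zero_mul])
      (fun x => by rw [norm_pow]; exact pow_le_pow_left₀ (norm_nonneg _) (hK x) k) γ
    rwa [if_pos hγ] at hle
  refine ((sum_wave T d).congr fun z _ => (hd z).symm).mono ?_
  calc ∑ γ ∈ T, ‖d γ‖ ≤ T.card * K ^ k := by
        simpa only [nsmul_eq_mul] using Finset.sum_le_card_nsmul T _ _ hc
    _ ≤ (k + 1) ^ s.card * K ^ k := by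
      gcongr
      exact_mod_cast card_frequencyLattice_le s k

lemma exists_sum_wave_add (h : HasWaveExpansion ⊤ realAxis F N) {η : ℝ} (hη : 0 < η) :
    ∃ (s : Finset ℝ) (p : ℝ → ℂ) (R : ℂ → ℂ), HasWaveExpansion ⊤ realAxis R η ∧
      ∀ z ∈ realAxis, F z = (∑ γ ∈ s, p γ * wave γ z) + R z := by
  obtain ⟨c, -, hc, hF⟩ := h.exists_coeff
  obtain ⟨s, hs⟩ := ((tendsto_order.1 (tendsto_tsum_compl_atTop_zero fun γ => ‖c γ‖)).2 η
    hη).exists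
  refine ⟨s, c, fun z => F z - ∑ γ ∈ s, c γ * wave γ z,
    ⟨{γ // γ ∉ s}, fun γ => c γ, fun γ => γ, fun _ => AddSubmonoid.mem_top _, hc.subtype _, hs.le,
      fun z hz => ?_⟩, fun z _ => (add_sub_cancel _ _).symm⟩
  exact (Finset.hasSum_compl_iff s (f := fun γ => c γ * wave γ z)).2 (by
    simpa only [sub_add_cancel] using hF z hz)

/-- The `ℓ¹` norm of the coefficients has spectral radius equal to the supremum norm: split off a
trigonometric polynomial and expand the power of the sum binomially. -/
lemma exists_pow (h : HasWaveExpansion ⊤ realAxis F N) (hρ : 0 ≤ ρ) (hr : ρ < r)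
    (hF : ∀ z ∈ realAxis, ‖F z‖ ≤ ρ) : ∃ d : ℕ, ∀ n : ℕ,
    HasWaveExpansion ⊤ realAxis (fun z => F z ^ n) ((n + 1 : ℝ) ^ d * r ^ n) := by
  have hη0 : 0 < (r - ρ) / 2 := by linarith
  obtain ⟨s, p, R, hR, hFR⟩ := h.exists_sum_wave_add hη0
  set η := (r - ρ) / 2 with hη
  have hP (x : ℝ) : ‖∑ γ ∈ s, p γ * wave γ x‖ ≤ ρ + η := by
    have hx : (x : ℂ) ∈ realAxis := ⟨x, rfl⟩
    rw [← add_sub_cancel_right (∑ γ ∈ s, p γ * wave γ x) (R x), ← hFR _ hx]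
    exact (norm_sub_le _ _).trans
      (add_le_add (hF _ hx) (hR.norm_le wavesBoundedOn_realAxis hx))
  refine ⟨s.card, fun n => ?_⟩
  have hterm (m : Fin (n + 1)) : HasWaveExpansion ⊤ realAxis
      (fun z => (n.choose m : ℂ) * ((∑ γ ∈ s, p γ * wave γ z) ^ (m : ℕ) * R z ^ (n - m)))
      ((n.choose m : ℝ) * (((m : ℕ) + 1 : ℝ) ^ s.card * (ρ + η) ^ (m : ℕ) * η ^ (n - m))) := by
    simpa only [norm_natCast] using (mul wavesBoundedOn_realAxis
      (sum_wave_pow s p (by positivity) hP m)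
      (hR.pow wavesBoundedOn_realAxis (n - m))).const_mul (n.choose m : ℂ)
  refine ((hasSum wavesBoundedOn_realAxis hterm (hasSum_fintype _)
    fun z _ => hasSum_fintype _).mono ?_).congr fun z hz => ?_
  · rw [Fin.sum_univ_eq_sum_range fun m => (n.choose m : ℝ) *
      ((m + 1 : ℝ) ^ s.card * (ρ + η) ^ m * η ^ (n - m)),
      show r = (ρ + η) + η by rw [hη]; ring, add_pow _ η n, Finset.mul_sum]
    refine Finset.sum_le_sum fun m hm => ?_
    have hmn : m ≤ n := Nat.lt_succ_iff.1 (Finset.mem_range.1 hm)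
    calc (n.choose m : ℝ) * ((m + 1 : ℝ) ^ s.card * (ρ + η) ^ m * η ^ (n - m))
        ≤ (n.choose m : ℝ) * ((n + 1 : ℝ) ^ s.card * (ρ + η) ^ m * η ^ (n - m)) := by gcongr
      _ = (n + 1) ^ s.card * ((ρ + η) ^ m * η ^ (n - m) * n.choose m) := by ring
  · simp only [hFR z hz, add_pow]
    rw [Fin.sum_univ_eq_sum_range fun m => (n.choose m : ℂ) *
      ((∑ γ ∈ s, p γ * wave γ z) ^ m * R z ^ (n - m))]
    exact Finset.sum_congr rfl fun m _ => by ring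

lemma inv_one_sub (h : HasWaveExpansion ⊤ realAxis F N) (hρ : ρ < 1)
    (hF : ∀ z ∈ realAxis, ‖F z‖ ≤ ρ) :
    ∃ M, HasWaveExpansion ⊤ realAxis (fun z => (1 - F z)⁻¹) M := by
  have hρ0 : 0 ≤ ρ := (norm_nonneg _).trans (hF 0 ⟨0, ofReal_zero⟩)
  obtain ⟨r, hρr, hr⟩ := exists_between hρ
  obtain ⟨d, hd⟩ := h.exists_pow hρ0 hρr hF
  have hr0 : 0 < r := hρ0.trans_lt hρr
  have hsum : Summable fun n : ℕ => ((n : ℝ) + 1) ^ d * r ^ n := by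
    refine (((summable_nat_add_iff 1).2 (summable_pow_mul_geometric_of_norm_lt_one d
      (r := r) (by rwa [Real.norm_of_nonneg hr0.le]))).mul_left (1 / r)).congr fun n => ?_
    push_cast
    field_simp
    ring
  exact ⟨_, hasSum wavesBoundedOn_realAxis hd hsum.hasSum fun z hz =>
    hasSum_geometric_of_norm_lt_one ((hF z hz).trans_lt hρ)⟩

/-- **Wiener's lemma** for absolutely convergent almost periodic series, from the identity
`1 / F = N⁻² F̄ / (1 - (1 - |F|² / N²))`. -/
lemma inv {δ : ℝ} (hF : HasWaveExpansion ⊤ realAxis F N) (hδ : 0 < δ)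
    (hlow : ∀ z ∈ realAxis, δ ≤ ‖F z‖) : ∃ M, HasWaveExpansion ⊤ realAxis (fun z => (F z)⁻¹) M := by
  have hB := wavesBoundedOn_realAxis
  have h0 : (0 : ℂ) ∈ realAxis := ⟨0, ofReal_zero⟩
  have hN0 : 0 < N := hδ.trans_le ((hlow 0 h0).trans (hF.norm_le hB h0))
  set f : ℂ → ℂ := fun z => 1 + (-(N ^ 2)⁻¹ : ℂ) * ((starRingEnd ℂ) (F z) * F z) with hf
  have hfval (z : ℂ) : f z = ((1 - ‖F z‖ ^ 2 / N ^ 2 : ℝ) : ℂ) := by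
    simp only [hf]
    rw [mul_comm ((starRingEnd ℂ) (F z)), Complex.mul_conj, Complex.normSq_eq_norm_sq]
    push_cast
    ring
  have hfnorm : ∀ z ∈ realAxis, ‖f z‖ ≤ 1 - δ ^ 2 / N ^ 2 := by
    intro z hz
    rw [hfval, Complex.norm_real, Real.norm_of_nonneg]
    · gcongr
      exact hlow z hz
    · rw [sub_nonneg, div_le_one (by positivity)]
      exact pow_le_pow_left₀ (norm_nonneg _) (hF.norm_le hB hz) 2
  obtain ⟨M, hM⟩ := inv_one_sub (one.add hB ((hF.conj.mul hB hF).const_mul _))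
    (sub_lt_self 1 (by positivity)) hfnorm
  refine ⟨_, ((hF.conj.mul hB hM).const_mul ((N ^ 2)⁻¹ : ℂ)).congr fun z hz => ?_⟩
  have hFz : F z ≠ 0 := norm_pos_iff.1 (hδ.trans_le (hlow z hz))
  have hNz : (N : ℂ) ≠ 0 := by exact_mod_cast hN0.ne'
  have hcz : (starRingEnd ℂ) (F z) ≠ 0 := (map_ne_zero _).2 hFz
  push_cast
  field_simp
  ring_nf

end HasWaveExpansion

/-! ### Dirichlet sums with bounded spectrum -/

/-- The Dirichlet sum `∑ a_γ e^{2πiγz}` over all real frequencies `γ`. -/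
def dirichletSum (a : ℝ → ℂ) (z : ℂ) : ℂ := ∑' γ, a γ * wave γ z

/-- The coefficient function `a` is absolutely summable and its spectrum `{γ | a γ ≠ 0}` is
contained in `[-M, M]`, so that `dirichletSum a` is an entire function of exponential type. -/
structure HasBoundedSpectrum (a : ℝ → ℂ) (M : ℝ) : Prop where
  summable_norm : Summable fun γ => ‖a γ‖
  abs_freq_le : ∀ γ, a γ ≠ 0 → |γ| ≤ M

lemma dirichletSum_add (a : ℝ → ℂ) (z t : ℂ) :
    dirichletSum a (z + t) = dirichletSum (fun γ => a γ * wave γ t) z :=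
  tsum_congr fun γ => by rw [wave_add_right]; ring

lemma norm_wave_le_exp {γ M : ℝ} (hγ : |γ| ≤ M) {z : ℂ} {Y : ℝ} (hz : |z.im| ≤ Y) :
    ‖wave γ z‖ ≤ Real.exp (2 * Real.pi * M * Y) := by
  rw [norm_wave, Real.exp_le_exp]
  have habs : |γ * z.im| ≤ M * Y := by
    rw [abs_mul]
    exact mul_le_mul hγ hz (abs_nonneg _) ((abs_nonneg _).trans hγ)
  nlinarith [neg_abs_le (γ * z.im), Real.pi_pos]

lemma isOpen_abs_im_lt (Y : ℝ) : IsOpen {z : ℂ | |z.im| < Y} :=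
  isOpen_lt (continuous_abs.comp Complex.continuous_im) continuous_const

namespace HasBoundedSpectrum

variable {a : ℝ → ℂ} {M : ℝ}

lemma norm_mul_wave_le (h : HasBoundedSpectrum a M) {z : ℂ} {Y : ℝ} (hz : |z.im| ≤ Y) (γ : ℝ) :
    ‖a γ * wave γ z‖ ≤ ‖a γ‖ * Real.exp (2 * Real.pi * M * Y) := by
  rw [norm_mul]
  rcases eq_or_ne (a γ) 0 with h0 | h0
  · simp [h0]
  · exact mul_le_mul_of_nonneg_left (norm_wave_le_exp (h.abs_freq_le γ h0) hz) (norm_nonneg _)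

lemma summable_norm_mul_wave (h : HasBoundedSpectrum a M) (z : ℂ) :
    Summable fun γ => ‖a γ * wave γ z‖ :=
  .of_nonneg_of_le (fun _ => norm_nonneg _) (h.norm_mul_wave_le le_rfl)
    (h.summable_norm.mul_right _)

lemma hasSum (h : HasBoundedSpectrum a M) (z : ℂ) :
    HasSum (fun γ => a γ * wave γ z) (dirichletSum a z) :=
  (h.summable_norm_mul_wave z).of_norm.hasSum

lemma norm_dirichletSum_le (h : HasBoundedSpectrum a M) {z : ℂ} {Y : ℝ} (hz : |z.im| ≤ Y) :
    ‖dirichletSum a z‖ ≤ (∑' γ, ‖a γ‖) * Real.exp (2 * Real.pi * M * Y) := by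
  rw [← tsum_mul_right]
  exact tsum_of_norm_bounded (h.summable_norm.mul_right _).hasSum (h.norm_mul_wave_le hz)

lemma differentiable (h : HasBoundedSpectrum a M) : Differentiable ℂ (dirichletSum a) := by
  intro z
  have hstrip := differentiableOn_tsum_of_summable_norm (U := {w : ℂ | |w.im| < |z.im| + 1})
    (F := fun γ z => a γ * wave γ z)
    (h.summable_norm.mul_right (Real.exp (2 * Real.pi * M * (|z.im| + 1))))
    (fun γ => ((differentiable_wave γ).const_mul _).differentiableOn) (isOpen_abs_im_lt _)
    (fun γ w hw => h.norm_mul_wave_le (le_of_lt hw) γ)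
  exact hstrip.differentiableAt ((isOpen_abs_im_lt _).mem_nhds (lt_add_one |z.im|))

lemma deriv_coeff (h : HasBoundedSpectrum a M) :
    HasBoundedSpectrum (fun γ => 2 * Real.pi * I * γ * a γ) M := by
  refine ⟨?_, fun γ hγ => h.abs_freq_le γ (right_ne_zero_of_mul hγ)⟩
  refine .of_nonneg_of_le (fun _ => norm_nonneg _) (fun γ => ?_)
    (h.summable_norm.mul_left (2 * Real.pi * M))
  rcases eq_or_ne (a γ) 0 with h0 | h0
  · simp [h0]
  · simp only [norm_mul, Complex.norm_real, Complex.norm_I, Real.norm_eq_abs,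
      abs_of_pos Real.pi_pos, Complex.norm_ofNat, mul_one]
    gcongr
    exact h.abs_freq_le γ h0

lemma deriv_dirichletSum (h : HasBoundedSpectrum a M) :
    deriv (dirichletSum a) = dirichletSum fun γ => 2 * Real.pi * I * γ * a γ := by
  funext z
  have hsum := hasSum_deriv_of_summable_norm (U := {w : ℂ | |w.im| < |z.im| + 1}) (z := z)
    (F := fun γ z => a γ * wave γ z)
    (h.summable_norm.mul_right (Real.exp (2 * Real.pi * M * (|z.im| + 1))))
    (fun γ => ((differentiable_wave γ).const_mul _).differentiableOn) (isOpen_abs_im_lt _)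
    (fun γ w hw => h.norm_mul_wave_le (le_of_lt hw) γ) (lt_add_one |z.im|)
  refine hsum.unique ((h.deriv_coeff.hasSum z).congr_fun fun γ => ?_)
  rw [((hasDerivAt_wave γ z).const_mul (a γ)).deriv]
  ring

lemma coeff_eq_zero (h : HasBoundedSpectrum a M) (h0 : ∀ x : ℝ, dirichletSum a x = 0) (γ : ℝ) :
    a γ = 0 :=
  norm_le_zero_iff.1 (norm_coeff_le h.summable_norm (f := fun x : ℝ => dirichletSum a x)
    (fun x => h.hasSum x) (fun x => by rw [h0 x, norm_zero]) γ)

end HasBoundedSpectrum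

/-! ### Phases and almost periods -/

/-- A unimodular function of the frequency. Multiplying the coefficients of a Dirichlet sum by
the phase `γ ↦ wave γ t` translates the sum by `t`, and limits of translates correspond to
arbitrary limits of such phases. -/
def IsPhase (χ : ℝ → ℂ) : Prop := ∀ γ, ‖χ γ‖ = 1

/-- The `ℓ¹` distance of the coefficient functions `a * χ` and `a * χ'`. -/
def phaseDist (a χ χ' : ℝ → ℂ) : ℝ := ∑' γ, ‖a γ‖ * ‖χ γ - χ' γ‖

lemma isPhase_wave (t : ℝ) : IsPhase fun γ => wave γ t := fun γ => norm_wave_ofReal γ t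

section Phase

variable {a χ χ' : ℝ → ℂ} {M : ℝ}

lemma IsPhase.norm_sub_le (hχ : IsPhase χ) (hχ' : IsPhase χ') (γ : ℝ) : ‖χ γ - χ' γ‖ ≤ 2 :=
  (_root_.norm_sub_le _ _).trans (by rw [hχ, hχ']; norm_num)

lemma IsPhase.summable_phaseDist (hχ : IsPhase χ) (hχ' : IsPhase χ')
    (ha : Summable fun γ => ‖a γ‖) : Summable fun γ => ‖a γ‖ * ‖χ γ - χ' γ‖ :=
  .of_nonneg_of_le (fun _ => by positivity)
    (fun γ => mul_le_mul_of_nonneg_left (hχ.norm_sub_le hχ' γ) (norm_nonneg _)) (ha.mul_right 2)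

lemma IsPhase.phaseDist_le_add {χ'' : ℝ → ℂ} (hχ : IsPhase χ) (hχ' : IsPhase χ')
    (hχ'' : IsPhase χ'') (ha : Summable fun γ => ‖a γ‖) :
    phaseDist a χ χ' ≤ phaseDist a χ χ'' + phaseDist a χ' χ'' := by
  have h₁ := hχ.summable_phaseDist hχ'' ha
  have h₂ := hχ'.summable_phaseDist hχ'' ha
  rw [phaseDist, phaseDist, phaseDist, ← h₁.tsum_add h₂]
  refine (hχ.summable_phaseDist hχ' ha).tsum_le_tsum (fun γ => ?_) (h₁.add h₂)
  rw [← mul_add, norm_sub_rev (χ' γ)]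
  exact mul_le_mul_of_nonneg_left (norm_sub_le_norm_sub_add_norm_sub _ _ _) (norm_nonneg _)

lemma HasBoundedSpectrum.mul_phase (h : HasBoundedSpectrum a M) (hχ : IsPhase χ) :
    HasBoundedSpectrum (fun γ => a γ * χ γ) M :=
  ⟨by simpa only [norm_mul, hχ _, mul_one] using h.summable_norm,
    fun γ hγ => h.abs_freq_le γ (left_ne_zero_of_mul hγ)⟩

lemma HasBoundedSpectrum.norm_sub_le_phaseDist (h : HasBoundedSpectrum a M) (hχ : IsPhase χ)
    (hχ' : IsPhase χ') {z : ℂ} {Y : ℝ} (hz : |z.im| ≤ Y) :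
    ‖dirichletSum (fun γ => a γ * χ γ) z - dirichletSum (fun γ => a γ * χ' γ) z‖ ≤
      phaseDist a χ χ' * Real.exp (2 * Real.pi * M * Y) := by
  rw [← (((h.mul_phase hχ).hasSum z).sub ((h.mul_phase hχ').hasSum z)).tsum_eq]
  refine tsum_of_norm_bounded
    ((hχ.summable_phaseDist hχ' h.summable_norm).hasSum.mul_right _) fun γ => ?_
  calc ‖a γ * χ γ * wave γ z - a γ * χ' γ * wave γ z‖
      = ‖χ γ - χ' γ‖ * ‖a γ * wave γ z‖ := by rw [← norm_mul]; congr 1; ring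
    _ ≤ ‖χ γ - χ' γ‖ * (‖a γ‖ * Real.exp (2 * Real.pi * M * Y)) := by
        gcongr
        exact h.norm_mul_wave_le hz γ
    _ = ‖a γ‖ * ‖χ γ - χ' γ‖ * Real.exp (2 * Real.pi * M * Y) := by ring

lemma exists_tendsto_phaseDist (ha : Summable fun γ => ‖a γ‖) (t : ℕ → ℝ) (U : Ultrafilter ℕ) :
    ∃ χ, IsPhase χ ∧ Tendsto (fun n => phaseDist a (fun γ => wave γ (t n)) χ) U (𝓝 0) := by
  have hex (γ : ℝ) : ∃ c : ℂ, ‖c‖ = 1 ∧ Tendsto (fun n => wave γ (t n)) U (𝓝 c) := by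
    obtain ⟨c, hc, hlim⟩ := (isCompact_sphere (0 : ℂ) 1).ultrafilter_le_nhds
      (U.map fun n => wave γ (t n)) (le_principal_iff.2 (Filter.mem_map.2
        (Eventually.of_forall fun n => by simp [norm_wave_ofReal])))
    exact ⟨c, mem_sphere_zero_iff_norm.1 hc, hlim⟩
  choose χ hχ hlim using hex
  refine ⟨χ, hχ, ?_⟩
  simpa only [phaseDist, sub_self, norm_zero, mul_zero, tsum_zero] using
    tendsto_tsum_of_dominated_convergence (𝓕 := (U : Filter ℕ))
      (f := fun n γ => ‖a γ‖ * ‖wave γ (t n) - χ γ‖) (ha.mul_right 2)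
      (fun γ => ((hlim γ).sub_const (χ γ)).norm.const_mul ‖a γ‖)
      (Eventually.of_forall fun n γ => by
        rw [Real.norm_of_nonneg (by positivity)]
        exact mul_le_mul_of_nonneg_left ((isPhase_wave (t n)).norm_sub_le hχ γ) (norm_nonneg _))

lemma phaseDist_wave_sub (a : ℝ → ℂ) (s t : ℝ) :
    phaseDist a (fun γ => wave γ (s - t : ℝ)) 1 =
      phaseDist a (fun γ => wave γ s) (fun γ => wave γ t) := by
  refine tsum_congr fun γ => ?_
  have hwave : wave γ s = wave γ (s - t : ℝ) * wave γ t := by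
    rw [← wave_add_right, ← ofReal_add, sub_add_cancel]
  simp only [hwave, ← sub_one_mul, norm_mul (_ - _), norm_wave_ofReal, mul_one, Pi.one_apply]

lemma exists_phaseDist_wave_one_lt (ha : Summable fun γ => ‖a γ‖) {ε : ℝ} (hε : 0 < ε) (N : ℕ) :
    ∃ T : ℝ, N ≤ T ∧ phaseDist a (fun γ => wave γ T) 1 < ε := by
  obtain ⟨χ, hχ, hlim⟩ := exists_tendsto_phaseDist ha (fun n => (n : ℝ)) (hyperfilter ℕ)
  have hev := (tendsto_order.1 hlim).2 (ε / 2) (half_pos hε)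
  obtain ⟨n, hn⟩ := hev.exists
  obtain ⟨m, hm, hmn⟩ :=
    (hev.and (Nat.hyperfilter_le_atTop (eventually_ge_atTop (n + N)))).exists
  refine ⟨(m : ℝ) - n, ?_, ?_⟩
  · have : ((n + N : ℕ) : ℝ) ≤ m := by exact_mod_cast hmn
    push_cast at this
    linarith
  · rw [phaseDist_wave_sub]
    have := (isPhase_wave m).phaseDist_le_add (isPhase_wave n) hχ ha
    linarith

end Phase

/-! ### Lower bounds on strips and matching of coefficients -/

lemma le_norm_of_forall_mem_sphere_le_norm {f : ℂ → ℂ} {c z : ℂ} {r m : ℝ} (hr : 0 < r)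
    (hm : 0 < m) (hf : DifferentiableOn ℂ f (closedBall c r)) (h0 : ∀ w ∈ closedBall c r, f w ≠ 0)
    (hle : ∀ w ∈ sphere c r, m ≤ ‖f w‖) (hz : z ∈ closedBall c r) : m ≤ ‖f z‖ := by
  have hinv : DiffContOnCl ℂ f⁻¹ (ball c r) :=
    DifferentiableOn.diffContOnCl (by rw [closure_ball _ hr.ne']; exact hf.inv h0)
  have hmax := norm_le_of_forall_mem_frontier_norm_le (C := m⁻¹) isBounded_ball hinv
    (fun w hw => by
      rw [frontier_ball _ hr.ne'] at hw
      rw [Pi.inv_apply, norm_inv]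
      exact inv_anti₀ hm (hle w hw))
    (z := z) (by rwa [closure_ball _ hr.ne'])
  rwa [Pi.inv_apply, norm_inv, inv_le_inv₀ (norm_pos_iff.2 (h0 z hz)) hm] at hmax

lemma exists_sphere_forall_le_norm {f : ℂ → ℂ} (hf : Differentiable ℂ f) (hne : ∃ w, f w ≠ 0)
    (c : ℂ) {ρ : ℝ} (hρ : 0 < ρ) :
    ∃ r, 0 < r ∧ r < ρ ∧ ∃ m, 0 < m ∧ ∀ w ∈ sphere c r, m ≤ ‖f w‖ := by
  have han : AnalyticOnNhd ℂ f Set.univ := fun w _ => hf.analyticAt w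
  have hisol : ∀ᶠ w in 𝓝[≠] c, f w ≠ 0 := by
    refine (han c trivial).eventually_eq_zero_or_eventually_ne_zero.resolve_left fun h0 => ?_
    obtain ⟨w, hw⟩ := hne
    exact hw (han.eqOn_zero_of_preconnected_of_eventuallyEq_zero isPreconnected_univ
      (Set.mem_univ c) h0 (Set.mem_univ w))
  rw [eventually_nhdsWithin_iff, Metric.eventually_nhds_iff_ball] at hisol
  obtain ⟨ε, hε, hball⟩ := hisol
  obtain ⟨r, hr, hrε⟩ := exists_between (lt_min hε hρ)
  obtain ⟨w₀, hw₀, hmin⟩ := (isCompact_sphere c r).exists_isMinOn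
    (NormedSpace.sphere_nonempty.2 hr.le) hf.continuous.norm.continuousOn
  refine ⟨r, hr, hrε.trans_le (min_le_right _ _), ‖f w₀‖, norm_pos_iff.2 (hball w₀ ?_ ?_),
    fun w hw => hmin hw⟩
  · exact sphere_subset_ball (hrε.trans_le (min_le_left _ _)) hw₀
  · exact ne_of_mem_sphere hw₀ hr.ne'

lemma abs_im_sub_le_of_mem_closedBall {w : ℂ} {y r : ℝ} (hw : w ∈ closedBall (y * I : ℂ) r) :
    |w.im - y| ≤ r := by
  simpa using (abs_im_le_norm (w - y * I)).trans (mem_closedBall_iff_norm.1 hw)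

namespace HasBoundedSpectrum

variable {a : ℝ → ℂ} {M : ℝ}

lemma exists_dirichletSum_ne_zero (h : HasBoundedSpectrum a M) (hne : ∃ γ, a γ ≠ 0) :
    ∃ w, dirichletSum a w ≠ 0 := by
  by_contra! h0
  obtain ⟨γ, hγ⟩ := hne
  exact hγ (h.coeff_eq_zero (fun x => h0 x) γ)

lemma half_le_norm_dirichletSum_add (h : HasBoundedSpectrum a M)
    (hz : ∀ z : ℂ, 0 < z.im → dirichletSum a z ≠ 0) {χ : ℝ → ℂ} (hχ : IsPhase χ) {y r m t : ℝ}
    (hr : 0 < r) (hry : r < y) (hm : 0 < m)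
    (hle : ∀ w ∈ sphere (y * I : ℂ) r, m ≤ ‖dirichletSum (fun γ => a γ * χ γ) w‖)
    (ht : phaseDist a (fun γ => wave γ t) χ * Real.exp (2 * Real.pi * M * (y + r)) ≤ m / 2)
    {w : ℂ} (hw : w ∈ closedBall (y * I : ℂ) r) : m / 2 ≤ ‖dirichletSum a (w + t)‖ := by
  refine le_norm_of_forall_mem_sphere_le_norm (f := fun w => dirichletSum a (w + t)) hr
    (half_pos hm) (h.differentiable.comp (differentiable_id.add_const _)).differentiableOn
    (fun w hw => hz _ ?_) (fun w hw => ?_) hw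
  · have := (abs_le.1 (abs_im_sub_le_of_mem_closedBall hw)).1
    rw [add_im, ofReal_im]
    linarith
  · have hdist := h.norm_sub_le_phaseDist (isPhase_wave t) hχ (z := w) (Y := y + r) (by
      have := abs_le.1 (abs_im_sub_le_of_mem_closedBall (sphere_subset_closedBall hw))
      rw [abs_le]
      constructor <;> linarith)
    rw [← dirichletSum_add] at hdist
    have := norm_sub_norm_le (dirichletSum (fun γ => a γ * χ γ) w) (dirichletSum a (w + t))
    rw [norm_sub_rev] at this
    linarith [hle w hw]

/-- Translates of a Dirichlet sum accumulate only at Dirichlet sums with twisted coefficients;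
by the minimum modulus principle a limit of values tending to `0` is therefore impossible. -/
lemma exists_le_norm_dirichletSum (h : HasBoundedSpectrum a M) (hne : ∃ γ, a γ ≠ 0)
    (hz : ∀ z : ℂ, 0 < z.im → dirichletSum a z ≠ 0) {y₁ : ℝ} (hy : 0 < y₁) (y₂ : ℝ) :
    ∃ δ > 0, ∀ z : ℂ, y₁ ≤ z.im → z.im ≤ y₂ → δ ≤ ‖dirichletSum a z‖ := by
  by_contra! hcon
  choose z hz₁ hz₂ hsmall using fun n : ℕ => hcon (1 / ((n : ℝ) + 1)) (by positivity)
  obtain ⟨χ, hχ, hlim⟩ :=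
    exists_tendsto_phaseDist h.summable_norm (fun n => (z n).re) (hyperfilter ℕ)
  obtain ⟨y, hyI, hylim⟩ := (isCompact_Icc (a := y₁) (b := y₂)).ultrafilter_le_nhds
    ((hyperfilter ℕ).map fun n => (z n).im)
    (le_principal_iff.2 (Filter.mem_map.2 (Eventually.of_forall fun n => ⟨hz₁ n, hz₂ n⟩)))
  have htwist : ∃ γ, a γ * χ γ ≠ 0 :=
    hne.imp fun γ hγ => mul_ne_zero hγ (norm_pos_iff.1 (by rw [hχ]; exact one_pos))
  obtain ⟨r, hr, hry, m, hm, hle⟩ := exists_sphere_forall_le_norm (h.mul_phase hχ).differentiable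
    ((h.mul_phase hχ).exists_dirichletSum_ne_zero htwist) (y * I) (hy.trans_le hyI.1)
  have hphase : ∀ᶠ n in (hyperfilter ℕ : Filter ℕ), phaseDist a (fun γ => wave γ (z n).re) χ <
      m / 2 / Real.exp (2 * Real.pi * M * (y + r)) :=
    (tendsto_order.1 hlim).2 _ (by positivity)
  have him : ∀ᶠ n in (hyperfilter ℕ : Filter ℕ), dist (z n).im y < r :=
    (Metric.tendsto_nhds (u := fun n => (z n).im)).1 hylim r hr
  have hvalue : ∀ᶠ n : ℕ in (hyperfilter ℕ : Filter ℕ), 1 / ((n : ℝ) + 1) < m / 2 :=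
    Nat.hyperfilter_le_atTop ((tendsto_order.1 tendsto_one_div_add_atTop_nhds_zero_nat).2 _
      (half_pos hm))
  obtain ⟨n, hn₁, hn₂, hn₃⟩ := (hphase.and (him.and hvalue)).exists
  rw [lt_div_iff₀ (Real.exp_pos _)] at hn₁
  have hlow := h.half_le_norm_dirichletSum_add hz hχ hr hry hm hle hn₁.le
    (w := (z n).im * I) (by
      rw [mem_closedBall_iff_norm, ← sub_mul, norm_mul, norm_I, mul_one, ← ofReal_sub, norm_real]
      exact hn₂.le)
  rw [add_comm, re_add_im] at hlow
  linarith [hsmall n]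

end HasBoundedSpectrum

section Rectangle

variable {F : ℂ → ℂ} {y₁ y₂ K : ℝ}

lemma norm_integral_horizontal_sub_le (hy : y₁ ≤ y₂)
    (hF : ∀ z : ℂ, y₁ ≤ z.im → z.im ≤ y₂ → DifferentiableAt ℂ F z)
    (hK : ∀ z : ℂ, y₁ ≤ z.im → z.im ≤ y₂ → ‖F z‖ ≤ K) (T : ℝ) :
    ‖(∫ x in (0 : ℝ)..T, F (x + y₁ * I)) - ∫ x in (0 : ℝ)..T, F (x + y₂ * I)‖ ≤
      2 * (K * (y₂ - y₁)) := by
  have hrect := integral_boundary_rect_eq_zero_of_differentiableOn F (y₁ * I) (T + y₂ * I)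
    fun z hz => by
      have him := (mem_reProdIm.1 hz).2
      simp only [mul_im, ofReal_re, I_im, mul_one, ofReal_im, I_re, mul_zero, add_zero, add_im,
        zero_add, Set.uIcc_of_le hy] at him
      exact (hF z him.1 him.2).differentiableWithinAt
  simp only [mul_re, ofReal_re, I_re, mul_zero, ofReal_im, I_im, mul_one, sub_self, add_re,
    add_zero, mul_im, add_im, zero_add, ofReal_zero, smul_eq_mul] at hrect
  have hvert (s : ℝ) : ‖I * ∫ y in y₁..y₂, F (s + y * I)‖ ≤ K * (y₂ - y₁) := by
    rw [norm_mul, norm_I, one_mul, ← abs_of_nonneg (sub_nonneg.2 hy)]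
    refine intervalIntegral.norm_integral_le_of_norm_le_const fun y hmem => ?_
    rw [Set.uIoc_of_le hy] at hmem
    exact hK _ (by simpa using hmem.1.le) (by simpa using hmem.2)
  have hsplit : (∫ x in (0 : ℝ)..T, F (x + y₁ * I)) - ∫ x in (0 : ℝ)..T, F (x + y₂ * I) =
      (I * ∫ y in y₁..y₂, F ((0 : ℝ) + y * I)) - I * ∫ y in y₁..y₂, F (T + y * I) := by
    rw [ofReal_zero]
    simp only [zero_add]
    linear_combination hrect
  rw [hsplit, two_mul]
  exact (norm_sub_le _ _).trans (add_le_add (hvert 0) (hvert T))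

lemma wave_coeff_eq_of_strip (hy : y₁ ≤ y₂)
    (hF : ∀ z : ℂ, y₁ ≤ z.im → z.im ≤ y₂ → DifferentiableAt ℂ F z)
    (hK : ∀ z : ℂ, y₁ ≤ z.im → z.im ≤ y₂ → ‖F z‖ ≤ K) {u v : ℝ → ℂ}
    (hu : Summable fun γ => ‖u γ‖) (hv : Summable fun γ => ‖v γ‖)
    (hu' : ∀ x : ℝ, HasSum (fun γ => u γ * wave γ x) (F (x + y₁ * I)))
    (hv' : ∀ x : ℝ, HasSum (fun γ => v γ * wave γ x) (F (x + y₂ * I))) (γ : ℝ) :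
    u γ * wave (-γ) (y₁ * I) = v γ * wave (-γ) (y₂ * I) := by
  have hmean (y T : ℝ) : ((1 / T : ℂ) * ∫ x in (0 : ℝ)..T, F (x + y * I) * wave (-γ) x) *
      wave (-γ) (y * I) =
        (1 / T : ℂ) * ∫ x in (0 : ℝ)..T, F (x + y * I) * wave (-γ) (x + y * I) := by
    simp only [wave_add_right, ← mul_assoc, intervalIntegral.integral_mul_const]
  have hlim := ((tendsto_mean_mul_wave_neg hu hu' γ).mul_const (wave (-γ) (y₁ * I))).sub
    ((tendsto_mean_mul_wave_neg hv hv' γ).mul_const (wave (-γ) (y₂ * I)))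
  simp only [hmean, ← mul_sub] at hlim
  set B := Real.exp (2 * Real.pi * |γ| * max |y₁| |y₂|)
  have hbound (z : ℂ) (h₁ : y₁ ≤ z.im) (h₂ : z.im ≤ y₂) : ‖F z * wave (-γ) z‖ ≤ K * B := by
    rw [norm_mul]
    exact mul_le_mul (hK z h₁ h₂) (norm_wave_le_exp (abs_neg γ).le (abs_le_max_abs_abs h₁ h₂))
      (norm_nonneg _) ((norm_nonneg _).trans (hK z h₁ h₂))
  have hzero : Tendsto (fun T : ℝ => T⁻¹ * (2 * (K * B * (y₂ - y₁)))) atTop (𝓝 0) := by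
    simpa only [zero_mul] using (tendsto_inv_atTop_zero (𝕜 := ℝ)).mul_const _
  refine sub_eq_zero.1 (tendsto_nhds_unique hlim (squeeze_zero_norm' ?_ hzero))
  filter_upwards [eventually_gt_atTop 0] with T hT
  rw [norm_mul, one_div, norm_inv, norm_real, Real.norm_of_nonneg hT.le]
  gcongr
  exact norm_integral_horizontal_sub_le hy
    (fun z h₁ h₂ => (hF z h₁ h₂).mul (differentiable_wave _ z)) hbound T

end Rectangle

/-! ### Zero-free bounded functions on the upper half-plane -/

lemma exists_eq_exp_of_ne_zero_on_ball {g : ℂ → ℂ} {c : ℂ} {R : ℝ}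
    (hg : DifferentiableOn ℂ g (ball c R)) (h0 : ∀ z ∈ ball c R, g z ≠ 0) :
    ∃ f : ℂ → ℂ, DifferentiableOn ℂ f (ball c R) ∧ ∀ z ∈ ball c R, g z = Complex.exp (f z) := by
  obtain ⟨f, hfc, hf⟩ := ((hg.deriv isOpen_ball).div hg h0).isExactOn_ball.with_val_at c
    (Complex.log (g c))
  refine ⟨f, fun z hz => (hf z hz).differentiableAt.differentiableWithinAt, fun z hz => ?_⟩
  have hderiv (w : ℂ) (hw : w ∈ ball c R) :
      HasDerivAt (fun z => g z * Complex.exp (-f z)) 0 w := by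
    have hgw := (hg.differentiableAt (isOpen_ball.mem_nhds hw)).hasDerivAt
    refine (hgw.mul (hf w hw).neg.cexp).congr_deriv ?_
    have := h0 w hw
    simp only [Pi.div_apply]
    field_simp
    ring
  have hc : c ∈ ball c R := mem_ball_self (pos_of_mem_ball hz)
  have hconst := isOpen_ball.is_const_of_deriv_eq_zero (convex_ball c R).isPreconnected
    (fun w hw => (hderiv w hw).differentiableAt.differentiableWithinAt)
    (fun w hw => (hderiv w hw).deriv) hz hc
  simp only [hfc, Complex.exp_neg, Complex.exp_log (h0 c hc), mul_inv_cancel₀ (h0 c hc)] at hconst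
  rwa [← div_eq_mul_inv, div_eq_one_iff_eq (Complex.exp_ne_zero _)] at hconst

/-- Harnack's inequality, by Borel–Carathéodory for `-1 / (f - i * Im (f w))`. -/
lemma mul_re_le_mul_re_of_re_pos {f : ℂ → ℂ} {c w : ℂ} {R : ℝ}
    (hf : DifferentiableOn ℂ f (ball c R)) (hpos : ∀ z ∈ ball c R, 0 < (f z).re)
    (hw : w ∈ ball c R) : (R - dist w c) * (f c).re ≤ (R + dist w c) * (f w).re := by
  have hR : 0 < R := pos_of_mem_ball hw
  have hmaps : Set.MapsTo (fun z => c + z) (ball 0 R) (ball c R) := fun z hz => by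
    simpa [mem_ball_iff_norm] using hz
  have hre (z : ℂ) : (f z - (f w).im * I).re = (f z).re := by simp
  have hne (z : ℂ) (hz : z ∈ ball c R) : f z - (f w).im * I ≠ 0 := fun h => by
    have := hpos z hz
    rw [← hre, h, zero_re] at this
    exact this.false
  set g : ℂ → ℂ := fun z => -(f (c + z) - (f w).im * I)⁻¹
  have hc := hpos c (mem_ball_self hR)
  have hg0 : ‖g 0‖ ≤ 1 / (f c).re := by
    rw [norm_neg, norm_inv, add_zero, one_div]
    exact inv_anti₀ hc ((hre c).symm.le.trans (re_le_norm _))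
  have hgre (z : ℂ) (hz : z ∈ ball 0 R) : (g z).re ≤ 0 := by
    rw [neg_re, inv_re, hre, neg_nonpos]
    exact div_nonneg (hpos _ (hmaps hz)).le (normSq_nonneg _)
  have hBC := borelCaratheodory_zero (f := fun z => g z - g 0) (R := R) (z := w - c)
    (one_div_pos.2 hc)
    ((((hf.comp (by fun_prop) hmaps).sub_const _).inv fun z hz => hne _ (hmaps hz)).neg.sub_const _)
    (fun z hz => by
      have := (neg_le_abs (g 0).re).trans (abs_re_le_norm _)
      simp only [Set.mem_ofPred_eq, sub_re]
      linarith [hgre z hz]) hR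
    (mem_ball_zero_iff.2 (mem_ball_iff_norm.1 hw)) (sub_self _)
  have hgw : ‖g (w - c)‖ = 1 / (f w).re := by
    have hfw : f w - (f w).im * I = (f w).re := by rw [sub_eq_iff_eq_add, re_add_im]
    simp only [g, add_sub_cancel, norm_neg, norm_inv]
    rw [hfw, norm_real, Real.norm_of_nonneg (hpos w hw).le, one_div]
  have hsum := (norm_sub_norm_le (g (w - c)) (g 0)).trans hBC
  have hd : 0 < R - dist w c := sub_pos.2 hw
  rw [← dist_eq_norm] at hsum
  have hquot : 1 / (f w).re ≤ (R + dist w c) / ((f c).re * (R - dist w c)) := by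
    calc 1 / (f w).re ≤ 1 / (f c).re + 2 * (1 / (f c).re) * dist w c / (R - dist w c) := by
          linarith
      _ = (R + dist w c) / ((f c).re * (R - dist w c)) := by field_simp; ring
  rw [div_le_div_iff₀ (hpos w hw) (by positivity)] at hquot
  linarith

section UpperHalfPlane

variable {g : ℂ → ℂ}

lemma mul_neg_log_norm_le (hg : Differentiable ℂ g) (h0 : ∀ z : ℂ, 0 < z.im → g z ≠ 0)
    (h1 : ∀ z : ℂ, 0 < z.im → ‖g z‖ < 1) {x y y' : ℝ} (hy : 0 < y) (hyy : y ≤ y') :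
    y * -Real.log ‖g (x + y' * I)‖ ≤ 2 * y' * -Real.log ‖g (x + y * I)‖ := by
  have him (z : ℂ) (hz : z ∈ ball (x + y' * I : ℂ) y') : 0 < z.im := by
    have := (abs_im_le_norm _).trans_lt (mem_ball_iff_norm.1 hz)
    simp only [sub_im, add_im, mul_im, ofReal_re, ofReal_im, I_re, I_im, mul_one, mul_zero,
      zero_add, add_zero] at this
    linarith [(abs_lt.1 this).1]
  obtain ⟨f, hf, hgf⟩ := exists_eq_exp_of_ne_zero_on_ball hg.differentiableOn
    fun z hz => h0 z (him z hz)
  have hlog (z : ℂ) (hz : z ∈ ball (x + y' * I : ℂ) y') : -Real.log ‖g z‖ = (-f z).re := by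
    rw [hgf z hz, Complex.norm_exp, Real.log_exp, neg_re]
  have hpos (z : ℂ) (hz : z ∈ ball (x + y' * I : ℂ) y') : 0 < -Real.log ‖g z‖ :=
    neg_pos.2 (Real.log_neg (norm_pos_iff.2 (h0 z (him z hz))) (h1 z (him z hz)))
  have hdist : dist (x + y * I : ℂ) (x + y' * I) = y' - y := by
    rw [dist_add_left, dist_eq_norm, ← sub_mul, norm_mul, norm_I, mul_one, ← ofReal_sub, norm_real,
      norm_sub_rev, Real.norm_of_nonneg (sub_nonneg.2 hyy)]
  have hw : (x + y * I : ℂ) ∈ ball (x + y' * I : ℂ) y' := by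
    rw [mem_ball, hdist]
    linarith
  have hharnack := mul_re_le_mul_re_of_re_pos hf.neg
    (fun z hz => (hpos z hz).trans_eq (hlog z hz)) hw
  rw [Pi.neg_apply, Pi.neg_apply, ← hlog _ hw,
    ← hlog _ (mem_ball_self (hy.trans_le hyy)), hdist] at hharnack
  nlinarith [hpos _ hw]

lemma inv_norm_le_exp_of_neg_log_norm_le (hg : Differentiable ℂ g)
    (h0 : ∀ z : ℂ, 0 < z.im → g z ≠ 0) (h1 : ∀ z : ℂ, 0 < z.im → ‖g z‖ < 1) {x y y' C : ℝ}
    (hy : 0 < y) (hyy : y ≤ y') (hC : -Real.log ‖g (x + y * I)‖ ≤ C * y) :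
    ‖g (x + y' * I)‖⁻¹ ≤ Real.exp (2 * C * y') := by
  have hpos : 0 < ‖g (x + y' * I)‖ :=
    norm_pos_iff.2 (h0 _ (by simpa using hy.trans_le hyy))
  rw [← Real.exp_log hpos, ← Real.exp_neg, Real.exp_le_exp]
  refine le_of_mul_le_mul_left ?_ hy
  calc y * -Real.log ‖g (x + y' * I)‖ ≤ 2 * y' * -Real.log ‖g (x + y * I)‖ :=
        mul_neg_log_norm_le hg h0 h1 hy hyy
    _ ≤ 2 * y' * (C * y) := mul_le_mul_of_nonneg_left hC (by linarith)
    _ = y * (2 * C * y') := by ring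

lemma inv_norm_le_exp_of_le_norm_horizontal (hg : Differentiable ℂ g)
    (h0 : ∀ z : ℂ, 0 < z.im → g z ≠ 0) (h1 : ∀ z : ℂ, 0 < z.im → ‖g z‖ < 1) {δ : ℝ} (hδ : 0 < δ)
    (hlow : ∀ s : ℝ, δ ≤ ‖g (s + I)‖) {y : ℝ} (hy : 1 ≤ y) (x : ℝ) :
    ‖g (x + y * I)‖⁻¹ ≤ Real.exp (2 * -Real.log δ * y) :=
  inv_norm_le_exp_of_neg_log_norm_le hg h0 h1 one_pos hy
    (by simpa using Real.log_le_log hδ (hlow x))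

lemma diffContOnCl_exp_mul_inv_translate (hg : Differentiable ℂ g)
    (h0 : ∀ z : ℂ, 0 < z.im → g z ≠ 0) (c x : ℝ) :
    DiffContOnCl ℂ (fun w => Complex.exp (-(c * w)) * (g (x + (1 + w) * I))⁻¹) {w | 0 < w.re} := by
  refine DifferentiableOn.diffContOnCl fun w hw => DifferentiableAt.differentiableWithinAt ?_
  rw [closure_setOfPred_lt_re] at hw
  refine DifferentiableAt.mul (by fun_prop) (DifferentiableAt.inv (by fun_prop) (h0 _ ?_))
  have : 0 < 1 + w.re := add_pos_of_pos_of_nonneg one_pos hw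
  simpa using this

lemma add_one_add_mul_I (x : ℝ) (w : ℂ) :
    (x + (1 + w) * I : ℂ) = (x - w.im : ℝ) + (1 + w.re : ℝ) * I := by
  apply Complex.ext <;> simp
  ring

lemma norm_exp_mul_inv_translate (g : ℂ → ℂ) (c x : ℝ) (w : ℂ) :
    ‖Complex.exp (-(c * w)) * (g (x + (1 + w) * I))⁻¹‖ =
      Real.exp (-(c * w.re)) * ‖g (x + (1 + w) * I)‖⁻¹ := by
  rw [norm_mul, norm_inv, Complex.norm_exp, neg_re, re_ofReal_mul]

lemma norm_exp_mul_inv_translate_le (hg : Differentiable ℂ g)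
    (h0 : ∀ z : ℂ, 0 < z.im → g z ≠ 0) (h1 : ∀ z : ℂ, 0 < z.im → ‖g z‖ < 1) {δ c : ℝ}
    (hδ : 0 < δ) (hc : 0 ≤ c) (hlow : ∀ s : ℝ, δ ≤ ‖g (s + I)‖) (x : ℝ) {w : ℂ}
    (hw : 0 ≤ w.re) :
    ‖Complex.exp (-(c * w)) * (g (x + (1 + w) * I))⁻¹‖ ≤
      Real.exp (2 * -Real.log δ) * Real.exp (2 * -Real.log δ * ‖w‖) := by
  have hδ1 : Real.log δ < 0 := Real.log_neg hδ ((hlow 0).trans_lt (h1 _ (by simp)))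
  have hline := inv_norm_le_exp_of_le_norm_horizontal hg h0 h1 hδ hlow
    (le_add_of_nonneg_right hw) (x - w.im)
  rw [norm_exp_mul_inv_translate, add_one_add_mul_I, ← Real.exp_add]
  calc _ ≤ 1 * Real.exp (2 * -Real.log δ * (1 + w.re)) := by
        gcongr
        exact Real.exp_le_one_iff.2 (neg_nonpos.2 (by positivity))
    _ ≤ _ := by
        rw [one_mul, Real.exp_le_exp]
        nlinarith [re_le_norm w]

/-- Phragmén–Lindelöf for `e^{-cw} / g (x + i (1 + w))` on the right half-plane; Harnack's
inequality supplies the exponential type that it requires. -/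
lemma le_norm_mul_exp_of_upper_half_plane (hg : Differentiable ℂ g)
    (h0 : ∀ z : ℂ, 0 < z.im → g z ≠ 0) (h1 : ∀ z : ℂ, 0 < z.im → ‖g z‖ < 1) {δ c x : ℝ}
    (hδ : 0 < δ) (hc : 0 ≤ c) (hlow : ∀ s : ℝ, δ ≤ ‖g (s + I)‖)
    (hray : ∀ᶠ y : ℝ in atTop, ‖g (x + y * I)‖⁻¹ ≤ Real.exp (c * y)) {y : ℝ} (hy : 1 ≤ y) :
    δ ≤ ‖g (y * I)‖ * Real.exp (c * (y - 1)) := by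
  set f : ℂ → ℂ := fun w => Complex.exp (-(c * w)) * (g (x + (1 + w) * I))⁻¹
  have hnorm (w : ℂ) : ‖f w‖ = Real.exp (-(c * w.re)) * ‖g (x + (1 + w) * I)‖⁻¹ :=
    norm_exp_mul_inv_translate g c x w
  have hgrowth : f =O[cobounded ℂ ⊓ 𝓟 {w | 0 < w.re}]
      fun w => Real.exp (2 * -Real.log δ * ‖w‖ ^ (1 : ℝ)) := by
    refine Asymptotics.IsBigO.of_bound (Real.exp (2 * -Real.log δ)) ?_
    filter_upwards [mem_inf_of_right (mem_principal_self _)] with w (hw : 0 < w.re)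
    rw [Real.rpow_one, Real.norm_of_nonneg (Real.exp_pos _).le]
    exact norm_exp_mul_inv_translate_le hg h0 h1 hδ hc hlow x hw.le
  have hreal : IsBoundedUnder (· ≤ ·) atTop fun s : ℝ => ‖f s‖ := by
    refine ⟨Real.exp c, Filter.eventually_map.2 ?_⟩
    filter_upwards [(tendsto_atTop_add_const_left _ 1 tendsto_id).eventually hray] with s hs
    have harg' : (x + (1 + s) * I : ℂ) = x + ((1 + s : ℝ) : ℂ) * I := by push_cast; ring
    rw [hnorm, ofReal_re, harg']
    calc _ ≤ Real.exp (-(c * s)) * Real.exp (c * (1 + s)) :=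
          mul_le_mul_of_nonneg_left hs (Real.exp_pos _).le
      _ = Real.exp c := by rw [← Real.exp_add]; ring_nf
  have hPL := PhragmenLindelof.right_half_plane_of_bounded_on_real (C := δ⁻¹)
    (z := (y - 1 : ℝ) + x * I)
    (diffContOnCl_exp_mul_inv_translate hg h0 c x) ⟨1, by norm_num, _, hgrowth⟩ hreal
    (fun s => by
      rw [hnorm, add_one_add_mul_I]
      simpa using inv_anti₀ hδ (hlow (x - s))) (by simpa using hy)
  have hz : (x + (1 + ((y - 1 : ℝ) + x * I)) * I : ℂ) = y * I := by
    push_cast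
    linear_combination (x : ℂ) * I_sq
  have hgy : 0 < ‖g (y * I)‖ := norm_pos_iff.2 (h0 _ (by simpa using one_pos.trans_le hy))
  rw [hnorm, hz, add_re, ofReal_re, re_ofReal_mul, I_re, mul_zero, add_zero, Real.exp_neg,
    ← mul_inv, inv_le_inv₀ (by positivity) hδ] at hPL
  rwa [mul_comm]

end UpperHalfPlane

/-! ### The smallest frequency is attained -/

lemma norm_dirichletSum_le_of_nonneg {a : ℝ → ℂ} (ha : Summable fun γ => ‖a γ‖)
    (hpos : ∀ γ, a γ ≠ 0 → 0 ≤ γ) {z : ℂ} (hz : 0 ≤ z.im) : ‖dirichletSum a z‖ ≤ ∑' γ, ‖a γ‖ :=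
  tsum_of_norm_bounded ha.hasSum fun γ => wavesBoundedOn_nonneg.norm_mul_wave_le (hpos γ) hz

lemma tendsto_wave_atTop {γ : ℝ} (hγ : 0 < γ) :
    Tendsto (fun y : ℝ => wave γ (y * I)) atTop (𝓝 0) := by
  rw [tendsto_zero_iff_norm_tendsto_zero]
  simp only [norm_wave, im_ofReal_mul, I_im, mul_one]
  exact Real.tendsto_exp_neg_atTop_nhds_zero.comp (tendsto_id.const_mul_atTop (by positivity))

lemma tendsto_tsum_norm_mul_wave {a : ℝ → ℂ} (ha : Summable fun γ => ‖a γ‖)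
    (hpos : ∀ γ, a γ ≠ 0 → 0 < γ) :
    Tendsto (fun y : ℝ => ∑' γ, ‖a γ * wave γ (y * I)‖) atTop (𝓝 0) := by
  simpa only [tsum_zero] using tendsto_tsum_of_dominated_convergence (𝓕 := (atTop : Filter ℝ))
    (f := fun (y : ℝ) γ => ‖a γ * wave γ (y * I)‖) (g := fun _ => (0 : ℝ)) ha
    (fun γ => by
      rcases eq_or_ne (a γ) 0 with h0 | h0
      · simp only [h0, zero_mul, norm_zero, tendsto_const_nhds]
      · simpa only [mul_zero, norm_zero] using
          ((tendsto_wave_atTop (hpos γ h0)).const_mul (a γ)).norm)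
    (by
      filter_upwards [eventually_ge_atTop 0] with y hy γ
      rw [norm_norm]
      exact wavesBoundedOn_nonneg.norm_mul_wave_le (fun h0 => (hpos γ h0).le)
        (by simpa using hy))

namespace HasBoundedSpectrum

variable {a : ℝ → ℂ} {M : ℝ}

lemma hasSum_horizontal (h : HasBoundedSpectrum a M) (y x : ℝ) :
    HasSum (fun γ => a γ * wave γ (y * I) * wave γ x) (dirichletSum a (x + y * I)) :=
  (h.hasSum _).congr_fun fun γ => by rw [wave_add_right]; ring

lemma exists_lt_norm_dirichletSum (h : HasBoundedSpectrum a M) {γ : ℝ} (hγ : a γ ≠ 0) (y : ℝ) :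
    ∃ x : ℝ, ‖a γ‖ / 2 * Real.exp (-(2 * Real.pi * γ * y)) < ‖dirichletSum a (x + y * I)‖ := by
  by_contra! hle
  have hcoeff := norm_coeff_le (h.summable_norm_mul_wave (y * I)) (h.hasSum_horizontal y) hle γ
  rw [norm_mul, norm_wave, im_ofReal_mul, I_im, mul_one] at hcoeff
  nlinarith [mul_pos (norm_pos_iff.2 hγ) (Real.exp_pos (-(2 * Real.pi * γ * y)))]

/-- The constant `18` is twice an upper bound for `2 * π + 1`, the factor `2` being the loss in
Harnack's inequality. -/
lemma exists_ray_inv_norm_le (h : HasBoundedSpectrum a M)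
    (hz : ∀ z : ℂ, 0 < z.im → dirichletSum a z ≠ 0)
    (hlt : ∀ z : ℂ, 0 < z.im → ‖dirichletSum a z‖ < 1) {γ : ℝ} (hγ : 0 < γ) (haγ : a γ ≠ 0) :
    ∃ x : ℝ, ∀ᶠ y : ℝ in atTop, ‖dirichletSum a (x + y * I)‖⁻¹ ≤ Real.exp (18 * γ * y) := by
  set Y := max 1 (Real.log (2 / ‖a γ‖) / γ)
  have hY : Real.log (2 / ‖a γ‖) ≤ γ * Y := by
    rw [mul_comm, ← div_le_iff₀ hγ]
    exact le_max_right _ _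
  have hY0 : 0 < Y := one_pos.trans_le (le_max_left _ _)
  have : 0 < ‖a γ‖ := norm_pos_iff.2 haγ
  obtain ⟨x, hx⟩ := h.exists_lt_norm_dirichletSum haγ Y
  have hlog : -Real.log ‖dirichletSum a (x + Y * I)‖ ≤ 9 * γ * Y := by
    have hle := Real.log_le_log (by positivity) hx.le
    rw [Real.log_mul (by positivity) (Real.exp_pos _).ne', Real.log_exp, ← inv_div, Real.log_inv]
      at hle
    nlinarith [mul_pos hγ hY0, Real.pi_lt_four]
  refine ⟨x, (eventually_ge_atTop Y).mono fun y hy => ?_⟩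
  have := inv_norm_le_exp_of_neg_log_norm_le h.differentiable hz hlt hY0 hy hlog
  rwa [← mul_assoc, show (2 * 9 : ℝ) = 18 by norm_num] at this

lemma exists_pos_forall_lt_coeff_eq_zero (h : HasBoundedSpectrum a M)
    (hz : ∀ z : ℂ, 0 < z.im → dirichletSum a z ≠ 0) (hpos : ∀ γ, a γ ≠ 0 → 0 < γ)
    (hsum : ∑' γ, ‖a γ‖ < 1) : ∃ ε > 0, ∀ γ < ε, a γ = 0 := by
  by_contra! hinf
  have hlt (z : ℂ) (hz : 0 < z.im) : ‖dirichletSum a z‖ < 1 :=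
    (norm_dirichletSum_le_of_nonneg h.summable_norm (fun γ h0 => (hpos γ h0).le) hz.le).trans_lt
      hsum
  obtain ⟨γ₁, -, hγ₁⟩ := hinf 1 one_pos
  obtain ⟨δ, hδ, hlow⟩ := h.exists_le_norm_dirichletSum ⟨γ₁, hγ₁⟩ hz one_pos 1
  have hexp (y : ℝ) (hy : 1 ≤ y) (ε : ℝ) (hε : 0 < ε) :
      δ ≤ ‖dirichletSum a (y * I)‖ * Real.exp (18 * ε * (y - 1)) := by
    obtain ⟨γ, hγε, haγ⟩ := hinf ε hε
    have hγ := hpos γ haγ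
    obtain ⟨x, hx⟩ := h.exists_ray_inv_norm_le hz hlt hγ haγ
    refine (le_norm_mul_exp_of_upper_half_plane h.differentiable hz hlt hδ (by positivity)
      (fun s => hlow _ (by simp) (by simp)) hx hy).trans ?_
    gcongr
  have hge (y : ℝ) (hy : 1 ≤ y) : δ ≤ ‖dirichletSum a (y * I)‖ := by
    have hcont : Continuous fun ε : ℝ =>
        ‖dirichletSum a (y * I)‖ * Real.exp (18 * ε * (y - 1)) := by fun_prop
    have hlim : Tendsto _ (𝓝[>] (0 : ℝ)) (𝓝 ‖dirichletSum a (y * I)‖) :=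
      (hcont.tendsto' 0 _ (by simp)).mono_left nhdsWithin_le_nhds
    refine ge_of_tendsto hlim ?_
    filter_upwards [self_mem_nhdsWithin] with ε hε using hexp y hy ε hε
  refine hδ.not_ge (ge_of_tendsto (tendsto_tsum_norm_mul_wave h.summable_norm hpos) ?_)
  filter_upwards [eventually_ge_atTop 1] with y hy
  exact (hge y hy).trans (norm_tsum_le_tsum_norm (h.summable_norm_mul_wave _))

lemma shift (h : HasBoundedSpectrum a M) (c : ℂ) (κ : ℝ) :
    HasBoundedSpectrum (fun γ => c * a (γ + κ)) (M + |κ|) := by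
  refine ⟨?_, fun γ hγ => ?_⟩
  · have hshift : Summable fun γ => ‖a (γ + κ)‖ :=
      (Equiv.addRight κ).summable_iff.2 h.summable_norm
    simpa only [norm_mul] using hshift.mul_left ‖c‖
  · have htri := abs_sub (γ + κ) κ
    rw [add_sub_cancel_right] at htri
    linarith [h.abs_freq_le _ (right_ne_zero_of_mul hγ)]

lemma dirichletSum_shift (h : HasBoundedSpectrum a M) (c : ℂ) (κ : ℝ) (z : ℂ) :
    dirichletSum (fun γ => c * a (γ + κ)) z = c * wave (-κ) z * dirichletSum a z := by
  have hshift := ((Equiv.addRight κ).hasSum_iff.2 (h.hasSum z)).mul_left (c * wave (-κ) z)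
  refine ((h.shift c κ).hasSum z).unique (hshift.congr_fun fun γ => ?_)
  rw [Function.comp_apply, Equiv.coe_addRight, wave_add_left, wave_neg_left]
  have := wave_ne_zero κ z
  field_simp

lemma exists_isLeast_freq (h : HasBoundedSpectrum a M) (hne : ∃ γ, a γ ≠ 0)
    (hz : ∀ z : ℂ, 0 < z.im → dirichletSum a z ≠ 0) : ∃ κ, IsLeast {γ | a γ ≠ 0} κ := by
  have hbdd : BddBelow {γ | a γ ≠ 0} := ⟨-M, fun γ hγ => (abs_le.1 (h.abs_freq_le γ hγ)).1⟩
  have hinf := isGLB_csInf hne hbdd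
  set κ := sInf {γ | a γ ≠ 0}
  refine ⟨κ, fun h0 => ?_, hinf.1⟩
  set c : ℂ := ((∑' γ, ‖a γ‖) + 1 : ℝ)⁻¹
  have htsum : 0 ≤ ∑' γ, ‖a γ‖ := tsum_nonneg fun _ => norm_nonneg _
  have hc : c ≠ 0 := inv_ne_zero (ofReal_ne_zero.2 (by linarith))
  obtain ⟨ε, hε, hgap⟩ := (h.shift c κ).exists_pos_forall_lt_coeff_eq_zero
    (fun z hz' => by
      rw [h.dirichletSum_shift]
      exact mul_ne_zero (mul_ne_zero hc (wave_ne_zero _ _)) (hz z hz'))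
    (fun γ hγ => by
      have hγ' := right_ne_zero_of_mul hγ
      refine lt_of_le_of_ne (by linarith [show κ ≤ γ + κ from hinf.1 hγ']) fun h => hγ' ?_
      rw [← h, zero_add, h0])
    (by
      simp only [norm_mul, tsum_mul_left, c, norm_inv, norm_real]
      rw [Real.norm_of_nonneg (by linarith), inv_mul_lt_iff₀ (by linarith), mul_one,
        show ∑' γ, ‖a (γ + κ)‖ = ∑' γ, ‖a γ‖ from (Equiv.addRight κ).tsum_eq fun γ => ‖a γ‖]
      exact lt_add_one _)
  obtain ⟨γ, hγ, hγκ⟩ := (isGLB_lt_iff hinf).1 (lt_add_of_pos_right κ hε)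
  have := hgap (γ - κ) (by linarith)
  rw [sub_add_cancel] at this
  exact hγ ((mul_eq_zero.1 this).resolve_left hc)

end HasBoundedSpectrum

/-! ### The logarithmic derivative in the upper half-plane -/

lemma HasWaveExpansion.log_one_add {S : AddSubmonoid ℝ} {X : Set ℂ} {F : ℂ → ℂ} {N : ℝ}
    (hB : WavesBoundedOn S X) (hF : HasWaveExpansion S X F N) (hN : N < 1) :
    ∃ M, HasWaveExpansion S X (fun z => Complex.log (1 + F z)) M := by
  have hterm (n : ℕ) :
      HasWaveExpansion S X (fun z => (-1) ^ (n + 1) / (n : ℂ) * F z ^ n) (N ^ n) := by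
    refine ((hF.pow hB n).const_mul _).mono (mul_le_of_le_one_left (pow_nonneg hF.nonneg n) ?_)
    rw [norm_div, norm_pow, norm_neg, norm_one, one_pow, Complex.norm_natCast, one_div]
    exact Nat.cast_inv_le_one n
  refine ⟨_, HasWaveExpansion.hasSum hB hterm (summable_geometric_of_lt_one hF.nonneg hN).hasSum
    fun z hz => ?_⟩
  refine (Complex.hasSum_taylorSeries_log ((hF.norm_le hB hz).trans_lt hN)).congr_fun fun n => ?_
  ring

section NonnegativeSpectrum

variable {l : ℝ → ℂ}

lemma differentiableAt_dirichletSum_of_nonneg (hl : Summable fun γ => ‖l γ‖)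
    (hpos : ∀ γ, l γ ≠ 0 → 0 ≤ γ) {w : ℂ} (hw : 0 < w.im) :
    DifferentiableAt ℂ (dirichletSum l) w := by
  refine (differentiableOn_tsum_of_summable_norm (U := {w : ℂ | 0 < w.im})
    (F := fun γ z => l γ * wave γ z) hl
    (fun γ => ((differentiable_wave γ).const_mul _).differentiableOn)
    UpperHalfPlane.isOpen_upperHalfPlaneSet fun γ z (hz : 0 < z.im) => ?_).differentiableAt
      (UpperHalfPlane.isOpen_upperHalfPlaneSet.mem_nhds hw)
  exact wavesBoundedOn_nonneg.norm_mul_wave_le (hpos γ) hz.le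

lemma hasSum_deriv_dirichletSum_of_nonneg (hl : Summable fun γ => ‖l γ‖)
    (hpos : ∀ γ, l γ ≠ 0 → 0 ≤ γ) {w : ℂ} (hw : 0 < w.im) :
    HasSum (fun γ : ℝ => 2 * Real.pi * I * γ * l γ * wave γ w) (deriv (dirichletSum l) w) := by
  refine (hasSum_deriv_of_summable_norm (U := {w : ℂ | 0 < w.im}) (z := w)
    (F := fun γ z => l γ * wave γ z) hl
    (fun γ => ((differentiable_wave γ).const_mul _).differentiableOn)
    UpperHalfPlane.isOpen_upperHalfPlaneSet
    (fun γ z (hz : 0 < z.im) => wavesBoundedOn_nonneg.norm_mul_wave_le (hpos γ) hz.le) hw).congr_fun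
    fun γ => ?_
  rw [((hasDerivAt_wave γ w).const_mul (l γ)).deriv]
  ring

end NonnegativeSpectrum

/-- The function `F` has, above height `H`, an absolutely convergent wave expansion with
coefficients `c` and nonnegative frequencies, and its small frequencies satisfy
`∑_{0 < γ < 1} |c_γ| / γ < ∞`. -/
structure HasExpansionAbove (c : ℝ → ℂ) (F : ℂ → ℂ) (H : ℝ) : Prop where
  summable_norm : ∀ z : ℂ, H < z.im → Summable fun γ => ‖c γ * wave γ z‖
  hasSum : ∀ z : ℂ, H < z.im → HasSum (fun γ => c γ * wave γ z) (F z)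
  eq_zero_of_neg : ∀ γ < 0, c γ = 0
  summable_div : Summable fun γ : Set.Ioo (0 : ℝ) 1 => ‖c γ‖ / (γ : ℝ)

namespace HasBoundedSpectrum

variable {a : ℝ → ℂ} {M : ℝ}

lemma exists_eq_exp_dirichletSum (h : HasBoundedSpectrum a M) (h0 : a 0 = 1)
    (hneg : ∀ γ < 0, a γ = 0) :
    ∃ (H : ℝ) (l : ℝ → ℂ), 0 < H ∧ (∀ γ, l γ ≠ 0 → 0 ≤ γ) ∧ (Summable fun γ => ‖l γ‖) ∧
      ∀ w : ℂ, 0 ≤ w.im → dirichletSum a (w + H * I) = Complex.exp (dirichletSum l w) := by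
  set p := Function.update a 0 0 with hp
  have hpne {γ : ℝ} (hγ : γ ≠ 0) : p γ = a γ := Function.update_of_ne hγ ..
  have hppos (γ : ℝ) (hγ : p γ ≠ 0) : 0 < γ := by
    have hγ0 : γ ≠ 0 := by rintro rfl; exact hγ (Function.update_self ..)
    exact (not_lt.1 fun hlt => hγ ((hpne hγ0).trans (hneg γ hlt))).lt_of_ne hγ0.symm
  have hpsum : Summable fun γ => ‖p γ‖ := (h.summable_norm.of_norm.update 0 0).norm
  obtain ⟨H, hH, hsmall⟩ := ((eventually_gt_atTop 0).and
    ((tendsto_tsum_norm_mul_wave hpsum hppos).eventually (gt_mem_nhds one_pos))).exists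
  have hq (w : ℂ) :
      HasSum (fun γ => p γ * wave γ (H * I) * wave γ w) (dirichletSum a (w + H * I) - 1) := by
    have hupd := (h.hasSum (w + H * I)).update 0 0
    rw [wave_zero_left, mul_one, h0, zero_sub, neg_add_eq_sub] at hupd
    refine hupd.congr_fun fun γ => ?_
    rcases eq_or_ne γ 0 with rfl | hγ
    · simp [hp]
    · rw [Function.update_of_ne hγ, hpne hγ, wave_add_right]
      ring
  have hexp := HasWaveExpansion.of_coeff (S := AddSubmonoid.nonneg ℝ) (X := {z | 0 ≤ z.im})
    (fun γ hγ => (hppos γ (left_ne_zero_of_mul hγ)).le)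
    (wavesBoundedOn_nonneg.summable_norm_mul_wave (fun γ hγ => (hppos γ hγ).le) hpsum
      (by simpa using hH.le)) fun w _ => hq w
  obtain ⟨N, hlog⟩ := hexp.log_one_add wavesBoundedOn_nonneg hsmall
  obtain ⟨l, hlpos, hlsum, hl⟩ := hlog.exists_coeff
  refine ⟨H, l, hH, hlpos, hlsum, fun w hw => ?_⟩
  have hlt : ‖dirichletSum a (w + H * I) - 1‖ < 1 :=
    (hexp.norm_le wavesBoundedOn_nonneg hw).trans_lt hsmall
  have hne : dirichletSum a (w + H * I) ≠ 0 := fun h0 => by simp [h0] at hlt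
  rw [show dirichletSum l w = _ from (hl w hw).tsum_eq, add_sub_cancel, Complex.exp_log hne]

lemma exists_eq_mul_exp_dirichletSum (h : HasBoundedSpectrum a M) {κ : ℝ}
    (hκ : IsLeast {γ | a γ ≠ 0} κ) :
    ∃ (H : ℝ) (l : ℝ → ℂ), 0 < H ∧ (∀ γ, l γ ≠ 0 → 0 ≤ γ) ∧ (Summable fun γ => ‖l γ‖) ∧
      ∀ w : ℂ, 0 ≤ w.im → dirichletSum a (w + H * I) =
        a κ * wave κ (w + H * I) * Complex.exp (dirichletSum l w) := by
  have haκ : a κ ≠ 0 := hκ.1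
  obtain ⟨H, l, hH, hlpos, hlsum, hl⟩ := (h.shift (a κ)⁻¹ κ).exists_eq_exp_dirichletSum
    (by rw [zero_add, inv_mul_cancel₀ haκ]) fun γ hγ => by
      by_contra hne
      linarith [hκ.2 (right_ne_zero_of_mul hne)]
  refine ⟨H, l, hH, hlpos, hlsum, fun w hw => ?_⟩
  rw [← hl w hw, h.dirichletSum_shift, wave_neg_left]
  have := wave_ne_zero κ (w + H * I)
  field_simp

end HasBoundedSpectrum

lemma logDeriv_of_eq_wave_mul_exp {f g : ℂ → ℂ} {C w t : ℂ} {κ : ℝ} (hC : C ≠ 0)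
    (hf : ∀ᶠ w in 𝓝 w, f (w + t) = C * wave κ (w + t) * Complex.exp (g w))
    (hg : DifferentiableAt ℂ g w) :
    logDeriv f (w + t) = 2 * Real.pi * I * κ + deriv g w := by
  have hderiv : HasDerivAt (fun w => C * wave κ (w + t) * Complex.exp (g w))
      (C * (2 * Real.pi * I * κ * wave κ (w + t)) * Complex.exp (g w) +
        C * wave κ (w + t) * (Complex.exp (g w) * deriv g w)) w :=
    (((hasDerivAt_wave κ (w + t)).comp_add_const w t).const_mul C).mul hg.hasDerivAt.cexp
  rw [logDeriv_apply, hf.self_of_nhds, ← deriv_comp_add_const, EventuallyEq.deriv_eq hf,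
    hderiv.deriv]
  have := wave_ne_zero κ (w + t)
  have := Complex.exp_ne_zero (g w)
  generalize wave κ (w + t) = e at *
  field_simp

lemma norm_two_pi_I_mul (γ : ℝ) : ‖(2 * Real.pi * I * γ : ℂ)‖ = 2 * Real.pi * |γ| := by
  simp [abs_of_pos Real.pi_pos]

namespace HasExpansionAbove

variable {c : ℝ → ℂ} {F G : ℂ → ℂ} {H : ℝ}

lemma congr (h : HasExpansionAbove c F H) (hFG : ∀ z : ℂ, H < z.im → F z = G z) :
    HasExpansionAbove c G H :=
  ⟨h.summable_norm, fun z hz => hFG z hz ▸ h.hasSum z hz, h.eq_zero_of_neg, h.summable_div⟩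

lemma translate (h : HasExpansionAbove c F 0) (hH : 0 ≤ H) :
    HasExpansionAbove (fun γ => c γ * wave (-γ) (H * I)) (fun z => F (z - H * I)) H := by
  have hterm (γ : ℝ) (z : ℂ) :
      c γ * wave γ (z - H * I) = c γ * wave (-γ) (H * I) * wave γ z := by
    rw [sub_eq_add_neg, wave_add_right, wave_neg_left_eq_neg_right]
    ring
  have him {z : ℂ} (hz : H < z.im) : 0 < (z - H * I).im := by simpa using hz
  refine ⟨fun z hz => ?_, fun z hz => ?_, fun γ hγ => ?_, ?_⟩
  · simpa only [hterm] using h.summable_norm _ (him hz)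
  · simpa only [hterm] using h.hasSum _ (him hz)
  · rw [h.eq_zero_of_neg γ hγ, zero_mul]
  · refine .of_nonneg_of_le (fun γ => div_nonneg (norm_nonneg _) γ.2.1.le) (fun γ => ?_)
      (h.summable_div.mul_right (Real.exp (2 * Real.pi * 1 * H)))
    rw [norm_mul, mul_div_right_comm]
    have hγ : |-(γ : ℝ)| ≤ 1 := by rw [abs_neg, abs_of_pos γ.2.1]; exact γ.2.2.le
    refine mul_le_mul_of_nonneg_left (norm_wave_le_exp hγ ?_)
      (div_nonneg (norm_nonneg _) γ.2.1.le)
    simp [abs_of_nonneg hH]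

/-- The factor `γ` gained by differentiation is what makes `∑ |c_γ| / γ` converge. -/
lemma const_add_deriv {l : ℝ → ℂ} (hl : Summable fun γ => ‖l γ‖) (hpos : ∀ γ, l γ ≠ 0 → 0 ≤ γ)
    (C : ℂ) : HasExpansionAbove (Function.update (fun γ => 2 * Real.pi * I * γ * l γ) 0 C)
      (fun w => C + deriv (dirichletSum l) w) 0 := by
  set c := Function.update (fun γ : ℝ => 2 * Real.pi * I * γ * l γ) 0 C with hc
  have hne {γ : ℝ} (hγ : γ ≠ 0) : c γ = 2 * Real.pi * I * γ * l γ := Function.update_of_ne hγ ..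
  have hterm (z : ℂ) : (fun γ => c γ * wave γ z) =
      Function.update (fun γ : ℝ => 2 * Real.pi * I * γ * l γ * wave γ z) 0 C := by
    funext γ
    rcases eq_or_ne γ 0 with rfl | hγ
    · simp [hc]
    · rw [hne hγ, Function.update_of_ne hγ]
  refine ⟨fun z hz => ?_, fun z hz => ?_, fun γ hγ => ?_, ?_⟩
  · have hsum : Summable fun γ : ℝ => 2 * Real.pi * I * γ * l γ * wave γ z :=
      (hasSum_deriv_dirichletSum_of_nonneg hl hpos hz).summable
    simpa only [← hterm] using (hsum.update 0 C).norm
  · rw [hterm]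
    simpa using (hasSum_deriv_dirichletSum_of_nonneg hl hpos hz).update 0 C
  · by_contra h0
    rw [hne hγ.ne] at h0
    exact hγ.not_ge (hpos γ (right_ne_zero_of_mul h0))
  · refine ((hl.subtype (Set.Ioo 0 1)).mul_left (2 * Real.pi)).congr fun γ => ?_
    have hγ : 0 < γ.1 := γ.2.1
    rw [hne hγ.ne', norm_mul, norm_two_pi_I_mul, abs_of_pos hγ, Function.comp_apply]
    field_simp

end HasExpansionAbove

namespace HasBoundedSpectrum

variable {a : ℝ → ℂ} {M : ℝ}

lemma exists_hasExpansionAbove (h : HasBoundedSpectrum a M) (hne : ∃ γ, a γ ≠ 0)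
    (hz : ∀ z : ℂ, 0 < z.im → dirichletSum a z ≠ 0) :
    ∃ (H : ℝ) (c : ℝ → ℂ), 0 < H ∧ HasExpansionAbove c (logDeriv (dirichletSum a)) H := by
  obtain ⟨κ, hκ⟩ := h.exists_isLeast_freq hne hz
  obtain ⟨H, l, hH, hlpos, hlsum, hl⟩ := h.exists_eq_mul_exp_dirichletSum hκ
  refine ⟨H, _, hH, ((HasExpansionAbove.const_add_deriv hlsum hlpos
    (2 * Real.pi * I * κ)).translate hH.le).congr fun z hzH => ?_⟩
  have him : 0 < (z - H * I).im := by simpa using hzH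
  have hlog := logDeriv_of_eq_wave_mul_exp hκ.1
    (mem_of_superset (UpperHalfPlane.isOpen_upperHalfPlaneSet.mem_nhds him)
      fun w (hw : 0 < w.im) => hl w hw.le)
    (differentiableAt_dirichletSum_of_nonneg hlsum hlpos him)
  rw [← hlog, sub_add_cancel]

lemma hasWaveExpansion_horizontal (h : HasBoundedSpectrum a M) (y : ℝ) :
    HasWaveExpansion ⊤ realAxis (fun z => dirichletSum a (z + y * I))
      (∑' γ, ‖a γ * wave γ (y * I)‖) :=
  .of_coeff (fun _ _ => trivial) (h.summable_norm_mul_wave _) (by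
    rintro _ ⟨x, rfl⟩
    exact h.hasSum_horizontal y x)

lemma exists_logDeriv_expansion_horizontal (h : HasBoundedSpectrum a M) (hne : ∃ γ, a γ ≠ 0)
    (hz : ∀ z : ℂ, 0 < z.im → dirichletSum a z ≠ 0) {y : ℝ} (hy : 0 < y) :
    ∃ u : ℝ → ℂ, (Summable fun γ => ‖u γ‖) ∧
      ∀ x : ℝ, HasSum (fun γ => u γ * wave γ x) (logDeriv (dirichletSum a) (x + y * I)) := by
  obtain ⟨δ, hδ, hlow⟩ := h.exists_le_norm_dirichletSum hne hz hy y
  obtain ⟨N, hinv⟩ := (h.hasWaveExpansion_horizontal y).inv hδ (by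
    rintro _ ⟨x, rfl⟩
    exact hlow _ (by simp) (by simp))
  obtain ⟨u, -, hu, hsum⟩ :=
    (HasWaveExpansion.mul wavesBoundedOn_realAxis
      (h.deriv_coeff.hasWaveExpansion_horizontal y) hinv).exists_coeff
  refine ⟨u, hu, fun x => ?_⟩
  rw [logDeriv_apply, h.deriv_dirichletSum, div_eq_mul_inv]
  exact hsum x ⟨x, rfl⟩

lemma exists_norm_logDeriv_le (h : HasBoundedSpectrum a M) (hne : ∃ γ, a γ ≠ 0)
    (hz : ∀ z : ℂ, 0 < z.im → dirichletSum a z ≠ 0) {y₁ : ℝ} (hy : 0 < y₁) (y₂ : ℝ) :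
    ∃ K, ∀ z : ℂ, y₁ ≤ z.im → z.im ≤ y₂ → ‖logDeriv (dirichletSum a) z‖ ≤ K := by
  obtain ⟨δ, hδ, hlow⟩ := h.exists_le_norm_dirichletSum hne hz hy y₂
  refine ⟨((∑' γ : ℝ, ‖2 * Real.pi * I * γ * a γ‖) * Real.exp (2 * Real.pi * M * y₂)) / δ,
    fun z hz₁ hz₂ => ?_⟩
  rw [logDeriv_apply, norm_div, h.deriv_dirichletSum]
  have habs : |z.im| ≤ y₂ := by rwa [abs_of_pos (hy.trans_le hz₁)]
  exact div_le_div₀ (by positivity) (h.deriv_coeff.norm_dirichletSum_le habs) hδ (hlow z hz₁ hz₂)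

lemma differentiableAt_logDeriv (h : HasBoundedSpectrum a M) {z : ℂ}
    (hz : dirichletSum a z ≠ 0) : DifferentiableAt ℂ (logDeriv (dirichletSum a)) z := by
  refine DifferentiableAt.div ?_ (h.differentiable z) hz
  rw [h.deriv_dirichletSum]
  exact h.deriv_coeff.differentiable z

lemma wave_coeff_logDeriv_eq (h : HasBoundedSpectrum a M) (hne : ∃ γ, a γ ≠ 0)
    (hz : ∀ z : ℂ, 0 < z.im → dirichletSum a z ≠ 0) {y₁ y₂ : ℝ} (hy₁ : 0 < y₁) (hy₂ : 0 < y₂)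
    {u v : ℝ → ℂ} (hu : Summable fun γ => ‖u γ‖) (hv : Summable fun γ => ‖v γ‖)
    (hu' : ∀ x : ℝ, HasSum (fun γ => u γ * wave γ x) (logDeriv (dirichletSum a) (x + y₁ * I)))
    (hv' : ∀ x : ℝ, HasSum (fun γ => v γ * wave γ x) (logDeriv (dirichletSum a) (x + y₂ * I)))
    (γ : ℝ) : u γ * wave (-γ) (y₁ * I) = v γ * wave (-γ) (y₂ * I) := by
  wlog hle : y₁ ≤ y₂ generalizing y₁ y₂ u v
  · exact (this hy₂ hy₁ hv hu hv' hu' (le_of_not_ge hle)).symm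
  obtain ⟨K, hK⟩ := h.exists_norm_logDeriv_le hne hz hy₁ y₂
  exact wave_coeff_eq_of_strip hle
    (fun z hz₁ _ => h.differentiableAt_logDeriv (hz z (hy₁.trans_le hz₁))) hK hu hv hu' hv' γ

lemma exists_hasExpansionAbove_zero (h : HasBoundedSpectrum a M) (hne : ∃ γ, a γ ≠ 0)
    (hz : ∀ z : ℂ, 0 < z.im → dirichletSum a z ≠ 0) :
    ∃ c : ℝ → ℂ, HasExpansionAbove c (logDeriv (dirichletSum a)) 0 := by
  obtain ⟨H, c, hH, hc⟩ := h.exists_hasExpansionAbove hne hz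
  have hline (z : ℂ) (hz0 : 0 < z.im) : (Summable fun γ => ‖c γ * wave γ z‖) ∧
      HasSum (fun γ => c γ * wave γ z) (logDeriv (dirichletSum a) z) := by
    obtain ⟨u, hu, hu'⟩ := h.exists_logDeriv_expansion_horizontal hne hz hz0
    have hcoeff (γ : ℝ) : c γ * wave γ z = u γ * wave γ z.re := by
      have hmatch := h.wave_coeff_logDeriv_eq hne hz hz0 (y₂ := H + 1) (by positivity) hu
        (hc.summable_norm ((H + 1 : ℝ) * I) (by simp)) hu'
        (fun x => (hc.hasSum (x + (H + 1 : ℝ) * I) (by simp)).congr_fun fun γ => by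
          rw [wave_add_right]; ring) γ
      rw [wave_neg_left, wave_neg_left, mul_inv_cancel_right₀ (wave_ne_zero _ _),
        ← div_eq_mul_inv, div_eq_iff (wave_ne_zero _ _)] at hmatch
      conv_lhs => rw [← re_add_im z, wave_add_right]
      rw [hmatch]
      ring
    have hsum := hu' z.re
    rw [re_add_im] at hsum
    simp only [hcoeff, norm_mul, norm_wave_ofReal, mul_one]
    exact ⟨hu, hsum⟩
  exact ⟨c, fun z hz0 => (hline z hz0).1, fun z hz0 => (hline z hz0).2, hc.eq_zero_of_neg,
    hc.summable_div⟩

end HasBoundedSpectrum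
/-! ### Rectangle integrals and the argument principle -/

/-- The boundary of the rectangle `[x₁, x₂] × [-1, 1]`. -/
def rectFrame (x₁ x₂ : ℝ) : Set ℂ :=
  {z | |z.im| ≤ 1 ∧ z.re ∈ Set.Icc x₁ x₂ ∧ (|z.im| = 1 ∨ z.re = x₁ ∨ z.re = x₂)}

/-- The counterclockwise contour integral of `f` along `rectFrame x₁ x₂`. -/
def rectIntegral (f : ℂ → ℂ) (x₁ x₂ : ℝ) : ℂ :=
  (∫ x : ℝ in x₁..x₂, f (x - I)) - (∫ x : ℝ in x₁..x₂, f (x + I))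
    + I * (∫ y : ℝ in (-1 : ℝ)..1, f (x₂ + y * I)) - I * (∫ y : ℝ in (-1 : ℝ)..1, f (x₁ + y * I))

lemma abs_le_one_of_mem_uIcc {y : ℝ} (hy : y ∈ Set.uIcc (-1 : ℝ) 1) : |y| ≤ 1 := by
  rw [Set.uIcc_of_le (by norm_num)] at hy
  exact abs_le.2 hy

section RectFrame

variable {x₁ x₂ : ℝ}

lemma sub_I_mem_rectFrame {x : ℝ} (hx : x ∈ Set.Icc x₁ x₂) : (x - I : ℂ) ∈ rectFrame x₁ x₂ := by
  simpa [rectFrame] using hx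

lemma add_I_mem_rectFrame {x : ℝ} (hx : x ∈ Set.Icc x₁ x₂) : (x + I : ℂ) ∈ rectFrame x₁ x₂ := by
  simpa [rectFrame] using hx

lemma left_mem_rectFrame (h : x₁ ≤ x₂) {y : ℝ} (hy : y ∈ Set.uIcc (-1 : ℝ) 1) :
    (x₁ + y * I : ℂ) ∈ rectFrame x₁ x₂ := by
  simpa [rectFrame, h] using abs_le_one_of_mem_uIcc hy

lemma right_mem_rectFrame (h : x₁ ≤ x₂) {y : ℝ} (hy : y ∈ Set.uIcc (-1 : ℝ) 1) :
    (x₂ + y * I : ℂ) ∈ rectFrame x₁ x₂ := by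
  simpa [rectFrame, h] using abs_le_one_of_mem_uIcc hy

lemma intervalIntegrable_of_continuousOn_rectFrame {f : ℂ → ℂ} (h : x₁ ≤ x₂)
    (hf : ContinuousOn f (rectFrame x₁ x₂)) :
    IntervalIntegrable (fun x : ℝ => f (x - I)) volume x₁ x₂ ∧
    IntervalIntegrable (fun x : ℝ => f (x + I)) volume x₁ x₂ ∧
    IntervalIntegrable (fun y : ℝ => f (x₂ + y * I)) volume (-1) 1 ∧
    IntervalIntegrable (fun y : ℝ => f (x₁ + y * I)) volume (-1) 1 := by
  refine ⟨(hf.comp (by fun_prop) fun x hx => ?_).intervalIntegrable,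
    (hf.comp (by fun_prop) fun x hx => ?_).intervalIntegrable,
    (hf.comp (by fun_prop) fun y hy => right_mem_rectFrame h hy).intervalIntegrable,
    (hf.comp (by fun_prop) fun y hy => left_mem_rectFrame h hy).intervalIntegrable⟩
  · exact sub_I_mem_rectFrame (Set.uIcc_of_le h ▸ hx)
  · exact add_I_mem_rectFrame (Set.uIcc_of_le h ▸ hx)

lemma rectIntegral_add {f g : ℂ → ℂ} (h : x₁ ≤ x₂) (hf : ContinuousOn f (rectFrame x₁ x₂))
    (hg : ContinuousOn g (rectFrame x₁ x₂)) :
    rectIntegral (fun z => f z + g z) x₁ x₂ = rectIntegral f x₁ x₂ + rectIntegral g x₁ x₂ := by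
  obtain ⟨f₁, f₂, f₃, f₄⟩ := intervalIntegrable_of_continuousOn_rectFrame h hf
  obtain ⟨g₁, g₂, g₃, g₄⟩ := intervalIntegrable_of_continuousOn_rectFrame h hg
  unfold rectIntegral
  rw [intervalIntegral.integral_add f₁ g₁, intervalIntegral.integral_add f₂ g₂,
    intervalIntegral.integral_add f₃ g₃, intervalIntegral.integral_add f₄ g₄]
  ring

lemma rectIntegral_const_mul (c : ℂ) (f : ℂ → ℂ) :
    rectIntegral (fun z => c * f z) x₁ x₂ = c * rectIntegral f x₁ x₂ := by
  simp only [rectIntegral, intervalIntegral.integral_const_mul]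
  ring

lemma rectIntegral_congr {f g : ℂ → ℂ} (h : x₁ ≤ x₂) (hfg : Set.EqOn f g (rectFrame x₁ x₂)) :
    rectIntegral f x₁ x₂ = rectIntegral g x₁ x₂ := by
  unfold rectIntegral
  rw [intervalIntegral.integral_congr fun x hx =>
      hfg (sub_I_mem_rectFrame (Set.uIcc_of_le h ▸ hx)),
    intervalIntegral.integral_congr fun x hx =>
      hfg (add_I_mem_rectFrame (Set.uIcc_of_le h ▸ hx)),
    intervalIntegral.integral_congr fun y hy => hfg (right_mem_rectFrame h hy),
    intervalIntegral.integral_congr fun y hy => hfg (left_mem_rectFrame h hy)]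

lemma rectIntegral_eq_zero {f : ℂ → ℂ} (h : x₁ ≤ x₂)
    (hf : ∀ z : ℂ, |z.im| ≤ 1 → z.re ∈ Set.Icc x₁ x₂ → DifferentiableAt ℂ f z) :
    rectIntegral f x₁ x₂ = 0 := by
  have hdiff : DifferentiableOn ℂ f
      (Set.uIcc (x₁ - I : ℂ).re (x₂ + I : ℂ).re ×ℂ Set.uIcc (x₁ - I : ℂ).im (x₂ + I : ℂ).im) := by
    intro z hz
    have hz' : z.re ∈ Set.uIcc x₁ x₂ ∧ z.im ∈ Set.uIcc (-1) 1 := by simpa [mem_reProdIm] using hz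
    exact (hf z (abs_le_one_of_mem_uIcc hz'.2)
      (Set.uIcc_of_le h ▸ hz'.1)).differentiableWithinAt
  simpa [rectIntegral, sub_eq_add_neg] using
    Complex.integral_boundary_rect_eq_zero_of_differentiableOn f (x₁ - I) (x₂ + I) hdiff

end RectFrame

lemma integral_mul_inv_eq_log_sub_log {f : ℝ → ℂ} {v : ℂ} {s t : ℝ}
    (hf : ∀ x, HasDerivAt f v x) (hslit : ∀ x, f x ∈ slitPlane) :
    ∫ x : ℝ in s..t, v * (f x)⁻¹ = log (f t) - log (f s) := by
  have hcont : Continuous f := continuous_iff_continuousAt.2 fun x => (hf x).continuousAt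
  refine intervalIntegral.integral_eq_sub_of_hasDerivAt (f := fun x => log (f x))
    (fun x _ => ?_) (Continuous.intervalIntegrable ?_ _ _)
  · simpa [div_eq_mul_inv] using (hf x).clog_real (hslit x)
  · exact continuous_const.mul (hcont.inv₀ fun x => slitPlane_ne_zero (hslit x))

lemma log_neg_of_im_pos {w : ℂ} (h : 0 < w.im) : log (-w) = log w - Real.pi * I := by
  rw [log, log, arg_neg_eq_arg_sub_pi_of_im_pos h, norm_neg]
  push_cast
  ring

lemma log_neg_of_im_neg {w : ℂ} (h : w.im < 0) : log (-w) = log w + Real.pi * I := by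
  rw [log, log, arg_neg_eq_arg_add_pi_of_im_neg h, norm_neg]
  push_cast
  ring

lemma sub_ne_zero_of_mem_rectFrame {x₁ x₂ b : ℝ} (hb : b ∈ Set.Ioo x₁ x₂) {z : ℂ}
    (hz : z ∈ rectFrame x₁ x₂) : z - b ≠ 0 := by
  rw [sub_ne_zero]
  rintro rfl
  obtain ⟨-, -, him | hre | hre⟩ := hz
  · simp at him
  · exact hb.1.ne' hre
  · exact hb.2.ne hre

lemma continuousOn_inv_sub_rectFrame {x₁ x₂ b : ℝ} (hb : b ∈ Set.Ioo x₁ x₂) :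
    ContinuousOn (fun z : ℂ => (z - b)⁻¹) (rectFrame x₁ x₂) :=
  ContinuousOn.inv₀ (by fun_prop) fun _ hz => sub_ne_zero_of_mem_rectFrame hb hz

lemma integral_inv_horizontal (b : ℝ) {y : ℝ} (hy : y ≠ 0) (s t : ℝ) :
    ∫ x : ℝ in s..t, ((x : ℂ) + y * I - b)⁻¹ = log (t + y * I - b) - log (s + y * I - b) := by
  simpa using integral_mul_inv_eq_log_sub_log (f := fun x : ℝ => (x : ℂ) + y * I - b) (v := 1)
    (fun x => ((hasDerivAt_id x).ofReal_comp.add_const _).sub_const _)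
    (fun x => Or.inr (by simpa using hy))

lemma hasDerivAt_vertical (x b y : ℝ) :
    HasDerivAt (fun y : ℝ => (x : ℂ) + y * I - b) I y := by
  simpa using (((hasDerivAt_id y).ofReal_comp.mul_const I).const_add (x : ℂ)).sub_const (b : ℂ)

lemma I_mul_integral_inv_vertical_of_lt {x b : ℝ} (h : b < x) (s t : ℝ) :
    I * ∫ y : ℝ in s..t, ((x : ℂ) + y * I - b)⁻¹ = log (x + t * I - b) - log (x + s * I - b) := by
  rw [← intervalIntegral.integral_const_mul]
  exact integral_mul_inv_eq_log_sub_log (hasDerivAt_vertical x b)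
    (fun y => Or.inl (by simpa using h))

lemma I_mul_integral_inv_vertical_of_gt {x b : ℝ} (h : x < b) (s t : ℝ) :
    I * ∫ y : ℝ in s..t, ((x : ℂ) + y * I - b)⁻¹ =
      log (-(x + t * I - b)) - log (-(x + s * I - b)) := by
  rw [← intervalIntegral.integral_const_mul]
  simpa only [Pi.neg_apply, inv_neg, neg_mul_neg] using
    integral_mul_inv_eq_log_sub_log (s := s) (t := t)
      (fun y => (hasDerivAt_vertical x b y).neg) (fun y => Or.inl (by simpa using h))

/-- Going round the rectangle, the branch of the logarithm changes exactly on the left side. -/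
lemma rectIntegral_inv_sub {x₁ x₂ b : ℝ} (hb : b ∈ Set.Ioo x₁ x₂) :
    rectIntegral (fun z => (z - b)⁻¹) x₁ x₂ = 2 * Real.pi * I := by
  have hbottom := integral_inv_horizontal b (neg_ne_zero.2 one_ne_zero) x₁ x₂
  have htop := integral_inv_horizontal b one_ne_zero x₁ x₂
  have hright := I_mul_integral_inv_vertical_of_lt hb.2 (-1) 1
  have hleft := I_mul_integral_inv_vertical_of_gt hb.1 (-1) 1
  simp only [ofReal_neg, ofReal_one, neg_one_mul, one_mul, ← sub_eq_add_neg] at *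
  rw [log_neg_of_im_pos (by simp), log_neg_of_im_neg (by simp)] at hleft
  rw [rectIntegral, hbottom, htop, hright, hleft]
  ring

lemma rectIntegral_sum_inv_sub_add {x₁ x₂ : ℝ} (h : x₁ ≤ x₂) (c : ℝ → ℂ) {F : ℂ → ℂ}
    (hF : ContinuousOn F (rectFrame x₁ x₂)) (Z : Finset ℝ) (hZ : ∀ b ∈ Z, b ∈ Set.Ioo x₁ x₂) :
    rectIntegral (fun z => (∑ b ∈ Z, c b * (z - b)⁻¹) + F z) x₁ x₂ =
      2 * Real.pi * I * ∑ b ∈ Z, c b + rectIntegral F x₁ x₂ := by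
  induction Z using Finset.induction_on with
  | empty => simp
  | insert b Z hb ih =>
    rw [Finset.forall_mem_insert] at hZ
    have hpole (b : ℝ) (hb : b ∈ Set.Ioo x₁ x₂) :
        ContinuousOn (fun z : ℂ => c b * (z - b)⁻¹) (rectFrame x₁ x₂) :=
      (continuousOn_inv_sub_rectFrame hb).const_mul _
    have hrest : ContinuousOn (fun z : ℂ => (∑ b ∈ Z, c b * (z - b)⁻¹) + F z) (rectFrame x₁ x₂) :=
      (continuousOn_finsetSum Z fun b hb => hpole b (hZ.2 b hb)).add hF
    simp only [Finset.sum_insert hb, add_assoc]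
    rw [rectIntegral_add h (hpole b hZ.1) hrest, ih hZ.2, rectIntegral_const_mul,
      rectIntegral_inv_sub hZ.1]
    ring

/-- `k x` is the multiplicity of each real point `x` as a zero of `Q`; the cofactors are required
to be entire, so this can be stated for entire `Q` only. -/
def HasRealZeroOrders (Q : ℂ → ℂ) (k : ℝ → ℕ) : Prop :=
  ∀ x : ℝ, ∃ g : ℂ → ℂ, Differentiable ℂ g ∧ g x ≠ 0 ∧ ∀ z, Q z = (z - (x : ℂ)) ^ k x * g z

lemma exists_eq_pow_mul_of_mul_eq {P G g : ℂ → ℂ} {b : ℂ} (hP : Continuous P) (hPb : P b ≠ 0)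
    (hG : Differentiable ℂ G) (hg : Continuous g) (n : ℕ)
    (h : ∀ z, P z * G z = (z - b) ^ n * g z) :
    ∃ G' : ℂ → ℂ, Differentiable ℂ G' ∧ (∀ z, G z = (z - b) ^ n * G' z) ∧
      ∀ z, P z * G' z = g z := by
  induction n generalizing G with
  | zero => exact ⟨G, hG, by simp, by simpa using h⟩
  | succ n ih =>
    have hGb : G b = 0 := by simpa [hPb] using h b
    have hfactor (z : ℂ) : G z = (z - b) * dslope G b z := by
      simpa [hGb] using (sub_smul_dslope G b z).symm
    have hdslope : Differentiable ℂ (dslope G b) := by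
      simpa [← differentiableOn_univ] using
        (Complex.differentiableOn_dslope univ_mem).2 hG.differentiableOn
    have hcancel : (fun z => P z * dslope G b z) = fun z => (z - b) ^ n * g z := by
      refine Continuous.ext_on (dense_compl_singleton b) (hP.mul hdslope.continuous)
        (by fun_prop) fun z hz => mul_left_cancel₀ (sub_ne_zero.2 hz) ?_
      rw [mul_left_comm, ← hfactor, h, pow_succ']
      ring
    obtain ⟨G', hG', hfac, hPG'⟩ := ih hdslope (congrFun hcancel)
    exact ⟨G', hG', fun z => by rw [hfactor, hfac, pow_succ']; ring, hPG'⟩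

namespace HasRealZeroOrders

variable {Q : ℂ → ℂ} {k : ℝ → ℕ}

lemma eq_zero_of_ne_zero (h : HasRealZeroOrders Q k) {x : ℝ} (hx : k x ≠ 0) : Q x = 0 := by
  obtain ⟨g, -, -, hQ⟩ := h x
  rw [hQ, sub_self, zero_pow hx, zero_mul]

lemma finite_zeros (h : HasRealZeroOrders Q k) (x₁ x₂ : ℝ) :
    {x : ℝ | x ∈ Set.Icc x₁ x₂ ∧ Q x = 0}.Finite := by
  by_contra hinf
  obtain ⟨x, -, hx⟩ := Set.Infinite.exists_accPt_of_subset_isCompact hinf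
    (isCompact_Icc (a := x₁) (b := x₂)) fun x hx => hx.1
  obtain ⟨g, hg, hgx, hQ⟩ := h x
  have hne : ∀ᶠ y : ℝ in 𝓝 x, g y ≠ 0 :=
    (hg.continuous.comp continuous_ofReal).continuousAt.eventually_ne hgx
  obtain ⟨y, ⟨hyx, -, hQy⟩, hgy⟩ := ((accPt_iff_frequently.1 hx).and_eventually hne).exists
  rw [hQ] at hQy
  exact mul_ne_zero (pow_ne_zero _ (sub_ne_zero.2 (ofReal_injective.ne hyx))) hgy hQy

lemma exists_eq_prod_mul (h : HasRealZeroOrders Q k) (hQ : Differentiable ℂ Q) (Z : Finset ℝ) :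
    ∃ G : ℂ → ℂ, Differentiable ℂ G ∧ (∀ z, Q z = (∏ b ∈ Z, (z - (b : ℂ)) ^ k b) * G z) ∧
      ∀ b ∈ Z, G b ≠ 0 := by
  induction Z using Finset.induction_on with
  | empty => exact ⟨Q, hQ, by simp, by simp⟩
  | insert b Z hb ih =>
    obtain ⟨G, hG, hQG, hGne⟩ := ih
    obtain ⟨g, hg, hgb, hQg⟩ := h b
    have hPb : ∏ c ∈ Z, ((b : ℂ) - c) ^ k c ≠ 0 :=
      Finset.prod_ne_zero_iff.2 fun c hc => pow_ne_zero _ (sub_ne_zero.2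
        (ofReal_injective.ne (ne_of_mem_of_not_mem hc hb).symm))
    obtain ⟨G', hG', hfac, hPG'⟩ := exists_eq_pow_mul_of_mul_eq
      (P := fun z => ∏ c ∈ Z, (z - (c : ℂ)) ^ k c) (by fun_prop) hPb hG hg.continuous (k b)
      fun z => by rw [← hQG, hQg]
    refine ⟨G', hG', fun z => ?_, (Finset.forall_mem_insert _ _ _).2 ⟨?_, fun c hc => ?_⟩⟩
    · rw [hQG, hfac, Finset.prod_insert hb]
      ring
    · exact right_ne_zero_of_mul ((hPG' b).trans_ne hgb)
    · exact right_ne_zero_of_mul ((hfac c).symm.trans_ne (hGne c hc))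

end HasRealZeroOrders

lemma differentiableAt_dslope_of_strip {ψ : ℂ → ℂ}
    (hψ : ∀ z : ℂ, |z.im| ≤ 1 → DifferentiableAt ℂ ψ z) (b : ℝ) {z : ℂ} (hz : |z.im| ≤ 1) :
    DifferentiableAt ℂ (dslope ψ b) z := by
  rcases eq_or_ne z b with rfl | hzb
  · have hmem : {z : ℂ | |z.im| < 1} ∈ 𝓝 (b : ℂ) :=
      (isOpen_lt (by fun_prop) (by fun_prop)).mem_nhds (by simp)
    exact ((Complex.differentiableOn_dslope hmem).2 fun w (hw : |w.im| < 1) =>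
      (hψ w hw.le).differentiableWithinAt).differentiableAt hmem
  · exact (differentiableAt_dslope_of_ne hzb).2 (hψ z hz)

lemma logDeriv_prod_mul {G : ℂ → ℂ} {z : ℂ} {Z : Finset ℝ} {k : ℝ → ℕ}
    (hG : DifferentiableAt ℂ G z) (hGz : G z ≠ 0) (hZ : ∀ b ∈ Z, z - (b : ℂ) ≠ 0) :
    logDeriv (fun z => (∏ b ∈ Z, (z - (b : ℂ)) ^ k b) * G z) z =
      ∑ b ∈ Z, k b * (z - b)⁻¹ + logDeriv G z := by
  have hP : ∏ b ∈ Z, (z - (b : ℂ)) ^ k b ≠ 0 :=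
    Finset.prod_ne_zero_iff.2 fun b hb => pow_ne_zero _ (hZ b hb)
  rw [logDeriv_mul z hP hGz (by fun_prop) hG,
    logDeriv_prod (f := fun (b : ℝ) (z : ℂ) => (z - (b : ℂ)) ^ k b)
      (fun b hb => pow_ne_zero _ (hZ b hb)) (fun b _ => by fun_prop)]
  congr 1
  refine Finset.sum_congr rfl fun b _ => ?_
  rw [logDeriv_fun_pow (f := fun z : ℂ => z - (b : ℂ)) (by fun_prop) (k b), logDeriv_apply]
  simp [div_eq_mul_inv]

/-- Subtracting from `logDeriv Q * ψ` its principal parts at the zeros leaves the function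
`∑ k b * dslope ψ b + logDeriv G * ψ`, where `G` is the zero-free part of `Q`. -/
lemma HasRealZeroOrders.rectIntegral_logDeriv_mul {Q ψ : ℂ → ℂ} {k : ℝ → ℕ}
    (h : HasRealZeroOrders Q k) (hQ : Differentiable ℂ Q) (hreal : ∀ z, Q z = 0 → z.im = 0)
    (hψ : ∀ z : ℂ, |z.im| ≤ 1 → DifferentiableAt ℂ ψ z) {x₁ x₂ : ℝ} (h₁₂ : x₁ ≤ x₂)
    {Z : Finset ℝ} (hZ : ∀ b ∈ Z, b ∈ Set.Ioo x₁ x₂)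
    (hZ' : ∀ x ∈ Set.Icc x₁ x₂, Q x = 0 → x ∈ Z) :
    rectIntegral (fun z => logDeriv Q z * ψ z) x₁ x₂ =
      2 * Real.pi * I * ∑ b ∈ Z, k b * ψ b := by
  obtain ⟨G, hG, hQG, hGZ⟩ := h.exists_eq_prod_mul hQ Z
  have hG0 (z : ℂ) (hz : z.re ∈ Set.Icc x₁ x₂) : G z ≠ 0 := by
    intro hGz
    have hQz : Q z = 0 := by rw [hQG, hGz, mul_zero]
    obtain ⟨x, rfl⟩ : ∃ x : ℝ, z = x := ⟨z.re, Complex.ext rfl (hreal z hQz)⟩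
    exact hGZ x (hZ' x hz hQz) hGz
  set R : ℂ → ℂ := fun z => ∑ b ∈ Z, k b * dslope ψ b z + logDeriv G z * ψ z with hR
  have hRdiff (z : ℂ) (hz : |z.im| ≤ 1) (hre : z.re ∈ Set.Icc x₁ x₂) :
      DifferentiableAt ℂ R z :=
    (DifferentiableAt.fun_sum fun b _ =>
      (differentiableAt_dslope_of_strip hψ b hz).const_mul _).add
      (((hG.deriv z).div (hG z) (hG0 z hre)).mul (hψ z hz))
  have hdecomp : Set.EqOn (fun z => logDeriv Q z * ψ z)
      (fun z => ∑ b ∈ Z, k b * ψ b * (z - b)⁻¹ + R z) (rectFrame x₁ x₂) := by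
    intro z hz
    have hzZ (b : ℝ) (hb : b ∈ Z) : z - (b : ℂ) ≠ 0 := sub_ne_zero_of_mem_rectFrame (hZ b hb) hz
    have hterm (b : ℝ) (hb : b ∈ Z) :
        k b * (z - b)⁻¹ * ψ z = k b * ψ b * (z - b)⁻¹ + k b * dslope ψ b z := by
      rw [← sub_add_cancel (ψ z) (ψ b), ← sub_smul_dslope ψ b z, smul_eq_mul]
      have := hzZ b hb
      field_simp
      ring
    simp only [hR]
    rw [funext hQG, logDeriv_prod_mul (hG z) (hG0 z hz.2.1) hzZ, add_mul, Finset.sum_mul,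
      Finset.sum_congr rfl hterm, Finset.sum_add_distrib, add_assoc]
  rw [rectIntegral_congr h₁₂ hdecomp, rectIntegral_sum_inv_sub_add h₁₂ (fun b => k b * ψ b)
    (fun z hz => (hRdiff z hz.1 hz.2.1).continuousAt.continuousWithinAt) Z hZ,
    rectIntegral_eq_zero h₁₂ hRdiff, add_zero]
/-! ### Summing test functions over the zeros -/

/-- `ψ` is holomorphic on the closed strip `|Im z| ≤ 1` and decays there like `C / (1 + x ^ 2)`,
so that it may be integrated along horizontal lines and the contribution of a vertical segment
vanishes as the segment moves to infinity. -/
structure IsStripTest (ψ : ℂ → ℂ) (C : ℝ) : Prop where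
  differentiableAt : ∀ z : ℂ, |z.im| ≤ 1 → DifferentiableAt ℂ ψ z
  norm_le : ∀ z : ℂ, |z.im| ≤ 1 → ‖ψ z‖ ≤ C * (1 + z.re ^ 2)⁻¹

lemma one_add_re_sq_le_norm_sq_add_four {z : ℂ} (hz : |z.im| ≤ 1) :
    1 + z.re ^ 2 ≤ ‖z ^ 2 + 4‖ := by
  obtain ⟨hlow, hhigh⟩ := abs_le.1 hz
  have hfactor : z ^ 2 + 4 = (z - 2 * I) * (z + 2 * I) := by linear_combination 4 * I_sq
  have hminus : 1 + z.re ^ 2 ≤ ‖z - 2 * I‖ ^ 2 := by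
    rw [← normSq_eq_norm_sq, normSq_apply]
    simp only [sub_re, sub_im, mul_re, mul_im, re_ofNat, im_ofNat, I_re, I_im]
    nlinarith
  have hplus : 1 + z.re ^ 2 ≤ ‖z + 2 * I‖ ^ 2 := by
    rw [← normSq_eq_norm_sq, normSq_apply]
    simp only [add_re, add_im, mul_re, mul_im, re_ofNat, im_ofNat, I_re, I_im]
    nlinarith
  refine le_of_sq_le_sq ?_ (norm_nonneg _)
  rw [hfactor, norm_mul, mul_pow, sq]
  exact mul_le_mul hminus hplus (by positivity) (by positivity)

lemma isStripTest_inv_sq_add_four : IsStripTest (fun z => (z ^ 2 + 4)⁻¹) 1 where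
  differentiableAt z hz := by
    have hpos : 0 < ‖z ^ 2 + 4‖ :=
      lt_of_lt_of_le (by positivity) (one_add_re_sq_le_norm_sq_add_four hz)
    exact DifferentiableAt.inv (by fun_prop) (norm_pos_iff.1 hpos)
  norm_le z hz := by
    rw [norm_inv, one_mul]
    exact inv_anti₀ (by positivity) (one_add_re_sq_le_norm_sq_add_four hz)

section Exhaustion

variable {ι : Type*} {Z : ℕ → Finset ι}

lemma summable_of_forall_eventually_mem {f : ι → ℝ} (hf : ∀ i, 0 ≤ f i)
    (hZ : ∀ i, f i ≠ 0 → ∀ᶠ n in atTop, i ∈ Z n) {B : ℝ}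
    (hB : ∀ᶠ n in atTop, ∑ i ∈ Z n, f i ≤ B) : Summable f := by
  refine summable_of_sum_le (c := B) hf fun s => ?_
  have hmem : ∀ᶠ n in atTop, ∀ i ∈ s, f i ≠ 0 → i ∈ Z n := by
    refine (eventually_all_finset s).2 fun i _ => ?_
    by_cases hi : f i = 0
    · simp [hi]
    · exact (hZ i hi).mono fun n hn _ => hn
  obtain ⟨n, hn, hBn⟩ := (hmem.and hB).exists
  classical
  rw [← Finset.sum_filter_ne_zero]
  refine (Finset.sum_le_sum_of_subset_of_nonneg (fun i hi => ?_) fun i _ _ => hf i).trans hBn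
  exact hn i (Finset.mem_filter.1 hi).1 (Finset.mem_filter.1 hi).2

lemma tendsto_sum_of_forall_eventually_mem {f : ι → ℂ} (hf : Summable f)
    (hZ : ∀ i, f i ≠ 0 → ∀ᶠ n in atTop, i ∈ Z n) :
    Tendsto (fun n => ∑ i ∈ Z n, f i) atTop (𝓝 (∑' i, f i)) := by
  classical
  have hlim := tendsto_tsum_of_dominated_convergence (𝓕 := atTop) (g := f)
    (f := fun n i => if i ∈ Z n then f i else 0) hf.norm (fun i => ?_)
    (Eventually.of_forall fun n i => ?_)
  · refine hlim.congr fun n => ?_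
    rw [tsum_eq_sum fun i hi => if_neg hi]
    exact Finset.sum_congr rfl fun i hi => if_pos hi
  · by_cases hi : f i = 0
    · simp [hi]
    · exact tendsto_const_nhds.congr' ((hZ i hi).mono fun n hn => (if_pos hn).symm)
  · split_ifs
    · exact le_rfl
    · simp

end Exhaustion

section RectLimit

variable {f : ℂ → ℂ} {B : ℝ}

lemma tendsto_integral_vertical {X : ℕ → ℝ} (hX : Tendsto (fun n => X n ^ 2) atTop atTop)
    (hf : ∀ n, ∀ y ∈ Set.uIcc (-1 : ℝ) 1, ‖f (X n + y * I)‖ ≤ B * (1 + X n ^ 2)⁻¹) :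
    Tendsto (fun n => I * ∫ y : ℝ in (-1 : ℝ)..1, f (X n + y * I)) atTop (𝓝 0) := by
  have hle (n : ℕ) : ‖I * ∫ y : ℝ in (-1 : ℝ)..1, f (X n + y * I)‖ ≤
      B * (1 + X n ^ 2)⁻¹ * |1 - (-1)| := by
    rw [norm_mul, norm_I, one_mul]
    exact intervalIntegral.norm_integral_le_of_norm_le_const fun y hy =>
      hf n y (Set.uIoc_subset_uIcc hy)
  refine squeeze_zero_norm hle ?_
  simpa using ((tendsto_inv_atTop_zero.comp (tendsto_atTop_add_const_left _ 1 hX)).const_mul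
    B).mul_const |(1 : ℝ) - (-1)|

lemma tendsto_rectIntegral {x₁ x₂ : ℕ → ℝ} (h₁ : Tendsto x₁ atTop atBot)
    (h₂ : Tendsto x₂ atTop atTop) (hle : ∀ n, x₁ n ≤ x₂ n)
    (hcont : ∀ z : ℂ, |z.im| = 1 → ContinuousAt f z)
    (hf : ∀ n, ∀ z ∈ rectFrame (x₁ n) (x₂ n), ‖f z‖ ≤ B * (1 + z.re ^ 2)⁻¹) :
    Tendsto (fun n => rectIntegral f (x₁ n) (x₂ n)) atTop
      (𝓝 ((∫ x : ℝ, f (x - I)) - ∫ x : ℝ, f (x + I))) := by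
  have hline (z : ℂ) (hz : |z.im| = 1) : ‖f z‖ ≤ B * (1 + z.re ^ 2)⁻¹ := by
    obtain ⟨n, hn₁, hn₂⟩ :=
      ((h₁.eventually_le_atBot z.re).and (h₂.eventually_ge_atTop z.re)).exists
    exact hf n z ⟨hz.le, ⟨hn₁, hn₂⟩, Or.inl hz⟩
  have hint {g : ℝ → ℂ} (hg : Continuous g) (him : ∀ x, |(g x).im| = 1)
      (hre : ∀ x, (g x).re = x) : Integrable fun x => f (g x) := by
    refine (integrable_inv_one_add_sq.const_mul B).mono' ?_ (ae_of_all _ fun x => ?_)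
    · exact (continuous_iff_continuousAt.2 fun x =>
        (hcont _ (him x)).comp hg.continuousAt).aestronglyMeasurable
    · simpa only [hre] using hline (g x) (him x)
  have hbottom := intervalIntegral_tendsto_integral
    (hint (g := fun x => x - I) (by fun_prop) (by simp) (by simp)) h₁ h₂
  have htop := intervalIntegral_tendsto_integral
    (hint (g := fun x => x + I) (by fun_prop) (by simp) (by simp)) h₁ h₂
  have hright := tendsto_integral_vertical ((tendsto_pow_atTop two_ne_zero).comp h₂)
    fun n y hy => by simpa using hf n _ (right_mem_rectFrame (hle n) hy)
  have hleft := tendsto_integral_vertical (X := x₁) (by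
    simpa only [Function.comp_def, neg_sq] using
      (tendsto_pow_atTop two_ne_zero).comp (tendsto_neg_atBot_atTop.comp h₁))
    fun n y hy => by simpa using hf n _ (left_mem_rectFrame (hle n) hy)
  simpa [rectIntegral] using ((hbottom.sub htop).add hright).sub hleft

end RectLimit

section Reflection

variable {a : ℝ → ℂ} {M : ℝ}

lemma HasBoundedSpectrum.comp_neg (h : HasBoundedSpectrum a M) :
    HasBoundedSpectrum (fun γ => a (-γ)) M :=
  ⟨(Equiv.neg ℝ).summable_iff.2 h.summable_norm, fun γ hγ => abs_neg γ ▸ h.abs_freq_le _ hγ⟩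

lemma dirichletSum_comp_neg (a : ℝ → ℂ) (z : ℂ) :
    dirichletSum (fun γ => a (-γ)) z = dirichletSum a (-z) := by
  rw [dirichletSum, dirichletSum, ← (Equiv.neg ℝ).tsum_eq (fun γ => a γ * wave γ (-z))]
  simp only [Equiv.neg_apply, wave_neg_left_eq_neg_right, neg_neg]

lemma logDeriv_dirichletSum_comp_neg (a : ℝ → ℂ) (z : ℂ) :
    logDeriv (dirichletSum fun γ => a (-γ)) z = -logDeriv (dirichletSum a) (-z) := by
  rw [funext (dirichletSum_comp_neg a), logDeriv_apply, logDeriv_apply, deriv_comp_neg, neg_div]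

lemma exists_comp_neg_ne_zero (hne : ∃ γ, a γ ≠ 0) : ∃ γ, a (-γ) ≠ 0 :=
  hne.imp' Neg.neg fun γ hγ => by rwa [neg_neg]

lemma dirichletSum_comp_neg_ne_zero (hz : ∀ z : ℂ, z.im < 0 → dirichletSum a z ≠ 0) {z : ℂ}
    (hz0 : 0 < z.im) : dirichletSum (fun γ => a (-γ)) z ≠ 0 := by
  rw [dirichletSum_comp_neg]
  exact hz (-z) (by simpa using hz0)

lemma phaseDist_wave_neg (a : ℝ → ℂ) (t : ℝ) :
    phaseDist a (fun γ => wave γ (-t : ℝ)) 1 = phaseDist a (fun γ => wave γ t) 1 := by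
  have hneg := phaseDist_wave_sub a 0 t
  have hpos := phaseDist_wave_sub a t 0
  rw [zero_sub] at hneg
  rw [sub_zero] at hpos
  rw [hneg, hpos]
  exact tsum_congr fun γ => by rw [norm_sub_rev]

end Reflection

namespace HasBoundedSpectrum

variable {a : ℝ → ℂ} {M : ℝ}

lemma exists_norm_logDeriv_le_of_abs_im_eq_one (h : HasBoundedSpectrum a M)
    (hne : ∃ γ, a γ ≠ 0) (hreal : ∀ z, dirichletSum a z = 0 → z.im = 0) :
    ∃ K, ∀ z : ℂ, |z.im| = 1 → ‖logDeriv (dirichletSum a) z‖ ≤ K := by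
  obtain ⟨K₁, hK₁⟩ := h.exists_norm_logDeriv_le hne
    (fun z hz h0 => hz.ne' (hreal z h0)) one_pos 1
  obtain ⟨K₂, hK₂⟩ := h.comp_neg.exists_norm_logDeriv_le (exists_comp_neg_ne_zero hne)
    (fun z => dirichletSum_comp_neg_ne_zero fun z hz h0 => hz.ne (hreal z h0)) one_pos 1
  refine ⟨max K₁ K₂, fun z hz => ?_⟩
  rcases (abs_eq zero_le_one).1 hz with him | him
  · exact (hK₁ z him.ge him.le).trans (le_max_left _ _)
  · have hbound := hK₂ (-z) (by simp [him]) (by simp [him])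
    rw [logDeriv_dirichletSum_comp_neg, neg_neg, norm_neg] at hbound
    exact hbound.trans (le_max_right _ _)

lemma exists_le_norm_dirichletSum_vertical (h : HasBoundedSpectrum a M) (hne : ∃ γ, a γ ≠ 0)
    (hreal : ∀ z, dirichletSum a z = 0 → z.im = 0) :
    ∃ x₀ m : ℝ, 0 < m ∧ ∀ z : ℂ, z.re = x₀ → |z.im| ≤ 1 → m ≤ ‖dirichletSum a z‖ := by
  obtain ⟨x₀, hx₀⟩ : ∃ x : ℝ, dirichletSum a x ≠ 0 := by
    by_contra! h0
    obtain ⟨γ, hγ⟩ := hne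
    exact hγ (h.coeff_eq_zero h0 γ)
  have hne0 (z : ℂ) (hz : z.re = x₀) : dirichletSum a z ≠ 0 := fun h0 => by
    have hzx : z = x₀ := Complex.ext (by simpa using hz) (by simpa using hreal z h0)
    exact hx₀ (hzx ▸ h0)
  have hcont : Continuous fun y : ℝ => ‖dirichletSum a (x₀ + y * I)‖ := by
    have := h.differentiable.continuous
    fun_prop
  obtain ⟨y, -, hy⟩ := (isCompact_Icc (a := (-1 : ℝ)) (b := 1)).exists_isMinOn ⟨0, by simp⟩
    hcont.continuousOn
  refine ⟨x₀, _, norm_pos_iff.2 (hne0 (x₀ + y * I) (by simp)), fun z hz hz1 => ?_⟩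
  calc _ ≤ ‖dirichletSum a (x₀ + z.im * I)‖ := hy (abs_le.1 hz1)
    _ = ‖dirichletSum a z‖ := by rw [← hz, re_add_im]

lemma exists_norm_logDeriv_le_of_phaseDist_lt (h : HasBoundedSpectrum a M) (hne : ∃ γ, a γ ≠ 0)
    (hreal : ∀ z, dirichletSum a z = 0 → z.im = 0) :
    ∃ K x₀ ε : ℝ, 0 < ε ∧ ∀ T : ℝ, phaseDist a (fun γ => wave γ T) 1 < ε →
      ∀ z : ℂ, z.re = x₀ + T → |z.im| ≤ 1 →
        dirichletSum a z ≠ 0 ∧ ‖logDeriv (dirichletSum a) z‖ ≤ K := by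
  obtain ⟨x₀, m, hm, hlow⟩ := h.exists_le_norm_dirichletSum_vertical hne hreal
  set W := Real.exp (2 * Real.pi * M * 1) with hW
  refine ⟨(∑' γ : ℝ, ‖2 * Real.pi * I * γ * a γ‖) * W / (m / 2), x₀, m / 2 / W, by positivity,
    fun T hT z hz hz1 => ?_⟩
  have hhalf : m / 2 ≤ ‖dirichletSum a z‖ := by
    have hclose := h.norm_sub_le_phaseDist (isPhase_wave T) (fun _ => norm_one) (χ' := 1)
      (z := z - T) (Y := 1) (by simpa using hz1)
    rw [← dirichletSum_add, sub_add_cancel, norm_sub_rev, ← hW] at hclose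
    simp only [Pi.one_apply, mul_one] at hclose
    have hbase := hlow (z - T) (by simp [hz]) (by simpa using hz1)
    have hsmall : phaseDist a (fun γ => wave γ T) 1 * W < m / 2 :=
      (lt_div_iff₀ (by positivity)).1 hT
    linarith [norm_sub_norm_le (dirichletSum a (z - T)) (dirichletSum a z)]
  refine ⟨norm_pos_iff.1 (lt_of_lt_of_le (half_pos hm) hhalf), ?_⟩
  rw [logDeriv_apply, norm_div, h.deriv_dirichletSum]
  exact div_le_div₀ (by positivity) (h.deriv_coeff.norm_dirichletSum_le hz1) (half_pos hm) hhalf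

lemma exists_rectFrame_norm_logDeriv_le (h : HasBoundedSpectrum a M) (hne : ∃ γ, a γ ≠ 0)
    (hreal : ∀ z, dirichletSum a z = 0 → z.im = 0) :
    ∃ K : ℝ, ∀ n : ℕ, ∃ x₁ x₂ : ℝ, x₁ ≤ -n ∧ n ≤ x₂ ∧ ∀ z ∈ rectFrame x₁ x₂,
      dirichletSum a z ≠ 0 ∧ ‖logDeriv (dirichletSum a) z‖ ≤ K := by
  obtain ⟨L, hL⟩ := h.exists_norm_logDeriv_le_of_abs_im_eq_one hne hreal
  obtain ⟨K, x₀, ε, hε, hK⟩ := h.exists_norm_logDeriv_le_of_phaseDist_lt hne hreal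
  refine ⟨max L K, fun n => ?_⟩
  obtain ⟨T, hT, hTε⟩ := exists_phaseDist_wave_one_lt h.summable_norm hε (n + ⌈|x₀|⌉₊)
  have hnT : (n : ℝ) + |x₀| ≤ T := by
    push_cast at hT
    linarith [Nat.le_ceil |x₀|]
  refine ⟨x₀ + -T, x₀ + T, by linarith [le_abs_self x₀], by linarith [neg_abs_le x₀], ?_⟩
  rintro z ⟨hz1, -, him | hre | hre⟩
  · exact ⟨fun h0 => by simp [hreal z h0] at him, (hL z him).trans (le_max_left _ _)⟩
  · exact (hK (-T) ((phaseDist_wave_neg a T).trans_lt hTε) z hre hz1).imp_right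
      fun hz => hz.trans (le_max_right _ _)
  · exact (hK T hTε z hre hz1).imp_right fun hz => hz.trans (le_max_right _ _)

lemma exists_tendsto_sum_zeros (h : HasBoundedSpectrum a M) (hne : ∃ γ, a γ ≠ 0)
    (hreal : ∀ z, dirichletSum a z = 0 → z.im = 0) {k : ℝ → ℕ}
    (hk : HasRealZeroOrders (dirichletSum a) k) :
    ∃ Z : ℕ → Finset ℝ, (∀ b, k b ≠ 0 → ∀ᶠ n in atTop, b ∈ Z n) ∧
      ∀ ψ C, IsStripTest ψ C →
        Tendsto (fun n => 2 * Real.pi * I * ∑ b ∈ Z n, k b * ψ b) atTop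
          (𝓝 ((∫ x : ℝ, logDeriv (dirichletSum a) (x - I) * ψ (x - I)) -
            ∫ x : ℝ, logDeriv (dirichletSum a) (x + I) * ψ (x + I))) := by
  obtain ⟨K, hK⟩ := h.exists_rectFrame_norm_logDeriv_le hne hreal
  choose x₁ x₂ hx₁ hx₂ hframe using hK
  have hle (n : ℕ) : x₁ n ≤ x₂ n :=
    (hx₁ n).trans ((neg_nonpos.2 n.cast_nonneg).trans (n.cast_nonneg.trans (hx₂ n)))
  have hlim₁ : Tendsto x₁ atTop atBot :=
    tendsto_atBot_mono hx₁ (tendsto_neg_atTop_atBot.comp tendsto_natCast_atTop_atTop)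
  have hlim₂ : Tendsto x₂ atTop atTop := tendsto_atTop_mono hx₂ tendsto_natCast_atTop_atTop
  refine ⟨fun n => (hk.finite_zeros (x₁ n) (x₂ n)).toFinset, fun b hb => ?_, fun ψ C hψ => ?_⟩
  · filter_upwards [hlim₁.eventually_le_atBot b, hlim₂.eventually_ge_atTop b] with n h₁ h₂
    exact (Set.Finite.mem_toFinset _).2 ⟨⟨h₁, h₂⟩, hk.eq_zero_of_ne_zero hb⟩
  · have hcont (z : ℂ) (hz : |z.im| = 1) :
        ContinuousAt (fun z => logDeriv (dirichletSum a) z * ψ z) z :=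
      ((h.differentiableAt_logDeriv fun h0 => by simp [hreal z h0] at hz).mul
        (hψ.differentiableAt z hz.le)).continuousAt
    refine (tendsto_rectIntegral (B := K * C) hlim₁ hlim₂ hle hcont fun n z hz => ?_).congr
      fun n => hk.rectIntegral_logDeriv_mul h.differentiable hreal hψ.differentiableAt (hle n)
        (fun b hb => ?_) fun x hx hx0 => (Set.Finite.mem_toFinset _).2 ⟨hx, hx0⟩
    · rw [norm_mul, mul_assoc]
      exact mul_le_mul (hframe n z hz).2 (hψ.norm_le z hz.1) (norm_nonneg _)
        ((norm_nonneg _).trans (hframe n z hz).2)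
    · obtain ⟨hb, hb0⟩ := (Set.Finite.mem_toFinset _).1 hb
      refine ⟨hb.1.lt_of_ne ?_, hb.2.lt_of_ne ?_⟩
      · rintro rfl
        exact (hframe n (x₁ n) (by simp [rectFrame, hle n])).1 hb0
      · rintro rfl
        exact (hframe n (x₂ n) (by simp [rectFrame, hle n])).1 hb0

lemma summable_zeros (h : HasBoundedSpectrum a M) (hne : ∃ γ, a γ ≠ 0)
    (hreal : ∀ z, dirichletSum a z = 0 → z.im = 0) {k : ℝ → ℕ}
    (hk : HasRealZeroOrders (dirichletSum a) k) :
    Summable fun b : ℝ => (k b : ℝ) * (1 + b ^ 2)⁻¹ := by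
  obtain ⟨Z, hZ, hlim⟩ := h.exists_tendsto_sum_zeros hne hreal hk
  obtain ⟨B, hB⟩ := (hlim _ _ isStripTest_inv_sq_add_four).norm.isBoundedUnder_le.eventually_le
  have hnorm (n : ℕ) : ‖2 * Real.pi * I * ∑ b ∈ Z n, (k b : ℂ) * ((b : ℂ) ^ 2 + 4)⁻¹‖ =
      2 * Real.pi * ∑ b ∈ Z n, (k b : ℝ) * (b ^ 2 + 4)⁻¹ := by
    have hreal : ∑ b ∈ Z n, (k b : ℂ) * ((b : ℂ) ^ 2 + 4)⁻¹ =
        (∑ b ∈ Z n, (k b : ℝ) * (b ^ 2 + 4)⁻¹ : ℝ) := by push_cast; rfl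
    rw [hreal, norm_mul, norm_real,
      Real.norm_of_nonneg (Finset.sum_nonneg fun b _ => by positivity)]
    simp [abs_of_pos Real.pi_pos]
  have hsum : Summable fun b : ℝ => (k b : ℝ) * (b ^ 2 + 4)⁻¹ := by
    refine summable_of_forall_eventually_mem (B := B / (2 * Real.pi)) (fun b => by positivity)
      (fun b hb => hZ b fun h0 => hb (by simp [h0])) ?_
    filter_upwards [hB] with n hn
    rwa [hnorm, mul_comm, ← le_div_iff₀ (by positivity)] at hn
  refine .of_nonneg_of_le (fun b => by positivity) (fun b => ?_) (hsum.mul_left 4)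
  rw [mul_left_comm]
  refine mul_le_mul_of_nonneg_left ?_ (by positivity)
  rw [← div_eq_mul_inv, inv_eq_one_div, div_le_div_iff₀ (by positivity) (by positivity)]
  nlinarith [sq_nonneg b]

lemma summable_zeros_mul (h : HasBoundedSpectrum a M) (hne : ∃ γ, a γ ≠ 0)
    (hreal : ∀ z, dirichletSum a z = 0 → z.im = 0) {k : ℝ → ℕ}
    (hk : HasRealZeroOrders (dirichletSum a) k) {ψ : ℝ → ℂ} {C : ℝ}
    (hψ : ∀ x, ‖ψ x‖ ≤ C * (1 + x ^ 2)⁻¹) : Summable fun b : ℝ => k b * ψ b := by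
  refine .of_norm_bounded ((h.summable_zeros hne hreal hk).mul_left C) fun b => ?_
  rw [norm_mul, Complex.norm_natCast, mul_left_comm]
  exact mul_le_mul_of_nonneg_left (hψ b) (by positivity)

lemma tsum_zeros_mul (h : HasBoundedSpectrum a M) (hne : ∃ γ, a γ ≠ 0)
    (hreal : ∀ z, dirichletSum a z = 0 → z.im = 0) {k : ℝ → ℕ}
    (hk : HasRealZeroOrders (dirichletSum a) k) {ψ : ℂ → ℂ} {C : ℝ} (hψ : IsStripTest ψ C) :
    2 * Real.pi * I * ∑' b : ℝ, k b * ψ b =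
      (∫ x : ℝ, logDeriv (dirichletSum a) (x - I) * ψ (x - I)) -
        ∫ x : ℝ, logDeriv (dirichletSum a) (x + I) * ψ (x + I) := by
  obtain ⟨Z, hZ, hlim⟩ := h.exists_tendsto_sum_zeros hne hreal hk
  have hsum : Summable fun b : ℝ => k b * ψ b :=
    h.summable_zeros_mul hne hreal hk (ψ := fun b => ψ b) fun b => by
      simpa using hψ.norm_le b (by simp)
  refine tendsto_nhds_unique (Tendsto.const_mul _ ?_) (hlim ψ C hψ)
  exact tendsto_sum_of_forall_eventually_mem hsum fun b hb => hZ b fun h0 => hb (by simp [h0])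

end HasBoundedSpectrum

/-! ### Fourier–Laplace transforms -/

/-- The Fourier–Laplace transform `z ↦ ∫ φ(t) e^{-2πitz} dt`: the entire extension of the Fourier
transform of a compactly supported function `φ`. -/
def fourierLaplace (φ : ℝ → ℂ) (z : ℂ) : ℂ := ∫ t : ℝ, φ t * wave (-t) z

lemma fourier_eq_fourierLaplace (φ : ℝ → ℂ) (x : ℝ) :
    FourierTransform.fourier φ x = fourierLaplace φ x := by
  rw [Real.fourier_eq', fourierLaplace]
  refine integral_congr_ae (.of_forall fun t => ?_)
  simp only [smul_eq_mul, wave, RCLike.inner_apply, conj_trivial]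
  rw [mul_comm]
  congr 2
  push_cast
  ring

lemma hasDerivAt_wave_neg_left (z : ℂ) (t : ℝ) :
    HasDerivAt (fun t : ℝ => wave (-t) z) (-(2 * Real.pi * I * z) * wave (-t) z) t := by
  have hlin : HasDerivAt (fun t : ℝ => 2 * Real.pi * Complex.I * z * ((-t : ℝ) : ℂ))
      (-(2 * Real.pi * I * z)) t := by
    simpa using (HasDerivAt.ofReal_comp (hasDerivAt_id t).neg).const_mul
      (2 * Real.pi * Complex.I * z)
  rw [mul_comm (-(2 * Real.pi * I * z))]
  exact hlin.cexp

lemma continuous_wave_neg_left (z : ℂ) : Continuous fun t : ℝ => wave (-t) z :=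
  continuous_iff_continuousAt.2 fun t => (hasDerivAt_wave_neg_left z t).continuousAt

lemma norm_wave_neg_le_exp {z : ℂ} {Y : ℝ} (hz : |z.im| ≤ Y) (t : ℝ) :
    ‖wave (-t) z‖ ≤ Real.exp (2 * Real.pi * |t| * Y) :=
  norm_wave_le_exp (abs_neg t).le hz

section

variable {φ : ℝ → ℂ}

lemma integrable_mul_wave_neg (hφ : Continuous φ) (hsupp : HasCompactSupport φ) (z : ℂ) :
    Integrable fun t : ℝ => φ t * wave (-t) z :=
  (hφ.mul (continuous_wave_neg_left z)).integrable_of_hasCompactSupport hsupp.mul_right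

lemma exists_norm_fourierLaplace_le (hφ : Continuous φ) (hsupp : HasCompactSupport φ) (Y : ℝ) :
    ∃ C : ℝ, ∀ z : ℂ, |z.im| ≤ Y → ‖fourierLaplace φ z‖ ≤ C := by
  refine ⟨∫ t : ℝ, ‖φ t‖ * Real.exp (2 * Real.pi * |t| * Y), fun z hz => ?_⟩
  refine (norm_integral_le_integral_norm _).trans ?_
  refine integral_mono (integrable_mul_wave_neg hφ hsupp z).norm ?_ fun t => ?_
  · exact Continuous.integrable_of_hasCompactSupport (by fun_prop) hsupp.norm.mul_right
  · rw [norm_mul]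
    exact mul_le_mul_of_nonneg_left (norm_wave_neg_le_exp hz t) (norm_nonneg _)

lemma differentiable_fourierLaplace (hφ : Continuous φ) (hsupp : HasCompactSupport φ) :
    Differentiable ℂ (fourierLaplace φ) := by
  intro z
  let G (w : ℂ) (t : ℝ) : ℂ := φ t * (2 * Real.pi * I * (-t : ℝ) * wave (-t) w)
  let bound (t : ℝ) : ℝ := ‖φ t‖ * (2 * Real.pi * |t| * Real.exp (2 * Real.pi * |t| * (|z.im| + 1)))
  have hG (t : ℝ) (w : ℂ) (hw : w ∈ ball z 1) : ‖G w t‖ ≤ bound t := by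
    have him : |w.im| ≤ |z.im| + 1 := by
      have hdist := (abs_im_le_norm (w - z)).trans (mem_ball_iff_norm.1 hw).le
      rw [sub_im] at hdist
      linarith [abs_sub_abs_le_abs_sub w.im z.im]
    rw [norm_mul, norm_mul, norm_two_pi_I_mul, abs_neg]
    exact mul_le_mul_of_nonneg_left
      (mul_le_mul_of_nonneg_left (norm_wave_neg_le_exp him t) (by positivity)) (norm_nonneg _)
  have hGint : Integrable (G z) := by
    have hid : Continuous fun t : ℝ => φ t * (2 * Real.pi * I * (-t : ℝ)) := by fun_prop
    simpa only [G, mul_assoc] using integrable_mul_wave_neg hid hsupp.mul_right z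
  have hbound : Integrable bound :=
    Continuous.integrable_of_hasCompactSupport (by fun_prop) hsupp.norm.mul_right
  exact (hasDerivAt_integral_of_dominated_loc_of_deriv_le (ball_mem_nhds z one_pos)
    (.of_forall fun w => (integrable_mul_wave_neg hφ hsupp w).aestronglyMeasurable)
    (integrable_mul_wave_neg hφ hsupp z) hGint.aestronglyMeasurable (.of_forall hG) hbound
    (.of_forall fun t w _ => (hasDerivAt_wave (-t) w).const_mul (φ t))).2.differentiableAt

lemma fourierLaplace_deriv (hφ : ContDiff ℝ 1 φ) (hsupp : HasCompactSupport φ) (z : ℂ) :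
    fourierLaplace (deriv φ) z = 2 * Real.pi * I * z * fourierLaplace φ z := by
  have hint : Integrable fun t : ℝ => wave (-t) z * φ t := by
    simpa only [mul_comm] using integrable_mul_wave_neg hφ.continuous hsupp z
  have hint_deriv : Integrable fun t : ℝ => wave (-t) z * deriv φ t := by
    simpa only [mul_comm] using
      integrable_mul_wave_neg (hφ.continuous_deriv le_rfl) hsupp.deriv z
  have hint_mul : Integrable fun t : ℝ => -(2 * Real.pi * I * z) * wave (-t) z * φ t := by
    simpa only [mul_assoc] using hint.const_mul (-(2 * Real.pi * I * z))
  have hparts := integral_mul_deriv_eq_deriv_mul_of_integrable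
    (fun t _ => hasDerivAt_wave_neg_left z t)
    (fun t _ => (hφ.differentiable one_ne_zero t).hasDerivAt) hint_deriv
    hint_mul hint
  calc fourierLaplace (deriv φ) z = ∫ t, wave (-t) z * deriv φ t := by
        simp only [fourierLaplace, mul_comm]
    _ = -∫ t, -(2 * Real.pi * I * z) * (φ t * wave (-t) z) := by
        rw [hparts]
        simp only [mul_assoc, mul_comm (φ _)]
    _ = 2 * Real.pi * I * z * fourierLaplace φ z := by
        rw [integral_const_mul, fourierLaplace]
        ring

lemma exists_isStripTest_fourierLaplace (hφ : ContDiff ℝ 2 φ) (hsupp : HasCompactSupport φ) :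
    ∃ C, IsStripTest (fourierLaplace φ) C := by
  have hφ' : ContDiff ℝ 1 (deriv φ) := ContDiff.deriv' (by rwa [one_add_one_eq_two])
  obtain ⟨C₀, h₀⟩ := exists_norm_fourierLaplace_le hφ.continuous hsupp 1
  obtain ⟨C₂, h₂⟩ :=
    exists_norm_fourierLaplace_le (hφ'.continuous_deriv le_rfl) hsupp.deriv.deriv 1
  refine ⟨C₀ + C₂, ⟨fun z _ => differentiable_fourierLaplace hφ.continuous hsupp z,
    fun z hz => ?_⟩⟩
  rw [← div_eq_mul_inv, le_div_iff₀ (by positivity)]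
  have htwice : ‖fourierLaplace (deriv (deriv φ)) z‖ =
      (2 * Real.pi) ^ 2 * ‖z‖ ^ 2 * ‖fourierLaplace φ z‖ := by
    rw [fourierLaplace_deriv hφ' hsupp.deriv, fourierLaplace_deriv (hφ.of_le one_le_two) hsupp]
    simp only [norm_mul, norm_I, norm_real, RCLike.norm_ofNat, Real.norm_eq_abs,
      abs_of_pos Real.pi_pos]
    ring
  have hre : z.re ^ 2 ≤ (2 * Real.pi) ^ 2 * ‖z‖ ^ 2 := by
    rw [← mul_pow, ← sq_abs]
    gcongr
    nlinarith [abs_re_le_norm z, norm_nonneg z, Real.pi_gt_three]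
  calc ‖fourierLaplace φ z‖ * (1 + z.re ^ 2)
      ≤ ‖fourierLaplace φ z‖ + (2 * Real.pi) ^ 2 * ‖z‖ ^ 2 * ‖fourierLaplace φ z‖ := by
        nlinarith [norm_nonneg (fourierLaplace φ z)]
    _ ≤ C₀ + C₂ := add_le_add (h₀ z hz) (htwice ▸ h₂ z hz)

/-- Shifting the line of integration multiplies `φ` by a wave in `t`, so the usual Fourier inversion
applies on every horizontal line. -/
lemma fourier_mul_wave_neg (φ : ℝ → ℂ) (w : ℂ) :
    FourierTransform.fourier (fun t => φ t * wave (-t) w) =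
      fun x : ℝ => fourierLaplace φ (x + w) := by
  funext x
  simp only [fourier_eq_fourierLaplace, fourierLaplace, wave_add_right]
  exact integral_congr_ae (.of_forall fun t => by ring)

lemma integrable_fourierLaplace (hφ : ContDiff ℝ 2 φ) (hsupp : HasCompactSupport φ) {s : ℝ}
    (hs : |s| ≤ 1) : Integrable fun x : ℝ => fourierLaplace φ (x + s * I) := by
  obtain ⟨C, hC⟩ := exists_isStripTest_fourierLaplace hφ hsupp
  have hcont := (differentiable_fourierLaplace hφ.continuous hsupp).continuous
  refine (integrable_inv_one_add_sq.const_mul C).mono'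
    (Continuous.aestronglyMeasurable (by fun_prop)) (.of_forall fun x => ?_)
  simpa using hC.norm_le (x + s * I) (by simpa using hs)

lemma integral_wave_mul_fourierLaplace (hφ : ContDiff ℝ 2 φ) (hsupp : HasCompactSupport φ)
    {s : ℝ} (hs : |s| ≤ 1) (γ : ℝ) :
    ∫ x : ℝ, wave γ x * fourierLaplace φ (x + s * I) = φ γ * wave (-γ) (s * I) := by
  have hcont : Continuous fun t : ℝ => φ t * wave (-t) (s * I) :=
    hφ.continuous.mul (continuous_wave_neg_left _)
  have hinv := congrFun (hcont.fourierInv_fourier_eq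
    (integrable_mul_wave_neg hφ.continuous hsupp _)
    (by rw [fourier_mul_wave_neg]; exact integrable_fourierLaplace hφ hsupp hs)) γ
  rw [← hinv, Real.fourierInv_eq', fourier_mul_wave_neg]
  refine integral_congr_ae (.of_forall fun x => ?_)
  simp only [smul_eq_mul, wave, RCLike.inner_apply, conj_trivial]
  congr 2
  push_cast
  ring

lemma hasSum_coeff_mul_of_horizontal (hφ : ContDiff ℝ 2 φ) (hsupp : HasCompactSupport φ) {s : ℝ}
    (hs : |s| ≤ 1) {c : ℝ → ℂ} {F : ℂ → ℂ} (hc : Summable fun γ => ‖c γ * wave γ (s * I)‖)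
    (hF : ∀ x : ℝ, HasSum (fun γ => c γ * wave γ (x + s * I)) (F (x + s * I))) :
    HasSum (fun γ => c γ * φ γ) (∫ x : ℝ, F (x + s * I) * fourierLaplace φ (x + s * I)) := by
  have hint := integrable_fourierLaplace hφ hsupp hs
  have hnorm (γ x : ℝ) : ‖wave γ x * fourierLaplace φ (x + s * I)‖ =
      ‖fourierLaplace φ (x + s * I)‖ := by
    rw [norm_mul, norm_wave_ofReal, one_mul]
  have hsum := hasSum_mul_integral (m := volume) hc
    (f := fun γ (x : ℝ) => wave γ x * fourierLaplace φ (x + s * I))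
    (B := ∫ x : ℝ, ‖fourierLaplace φ (x + s * I)‖)
    (fun γ => hint.norm.mono'
      (((continuous_wave γ).comp continuous_ofReal).aestronglyMeasurable.mul
        hint.aestronglyMeasurable) (.of_forall fun x => (hnorm γ x).le))
    (fun γ => by simp only [hnorm, le_refl])
  have htsum (x : ℝ) : ∑' γ, c γ * wave γ (s * I) * (wave γ x * fourierLaplace φ (x + s * I)) =
      F (x + s * I) * fourierLaplace φ (x + s * I) := by
    rw [← ((hF x).mul_right _).tsum_eq]
    exact tsum_congr fun γ => by rw [wave_add_right]; ring
  simp only [htsum] at hsum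
  refine hsum.congr_fun fun γ => ?_
  rw [integral_wave_mul_fourierLaplace hφ hsupp hs, wave_neg_left]
  field_simp [wave_ne_zero]

end

/-! ### The Fourier transform of the zeros -/

/-- The coefficients `b` are absolutely summable against every weight `e^{-s|γ|}` with `s > 0`.
For the masses of a measure `ν` this gives `log |ν|(B(0, r)) = o(r)`. -/
def HasSubexponentialGrowth (b : ℝ → ℂ) : Prop :=
  ∀ s : ℝ, 0 < s → Summable fun γ => ‖b γ‖ * Real.exp (-(s * |γ|))

namespace HasSubexponentialGrowth

lemma countable_support {b : ℝ → ℂ} (h : HasSubexponentialGrowth b) :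
    (Function.support b).Countable :=
  (h 1 one_pos).countable_support.mono fun _ hγ =>
    mul_ne_zero (norm_ne_zero_iff.2 hγ) (Real.exp_ne_zero _)

variable {ν : PPM ℝ}

lemma var_ball_le (h : HasSubexponentialGrowth ν.mass) {s : ℝ} (hs : 0 < s) (r : ℝ) :
    ν.var (ball 0 r) ≤
      ENNReal.ofReal ((∑' γ, ‖ν.mass γ‖ * Real.exp (-(s * |γ|))) * Real.exp (s * r)) := by
  rw [← tsum_mul_right, ENNReal.ofReal_tsum_of_nonneg (fun γ => by positivity)
    ((h s hs).mul_right _)]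
  refine le_trans (ENNReal.tsum_le_tsum fun γ : ball (0 : ℝ) r => ?_)
    (ENNReal.tsum_comp_le_tsum_of_injective Subtype.val_injective _)
  have hγ : |(γ : ℝ)| < r := by simpa only [mem_ball_zero_iff, Real.norm_eq_abs] using γ.2
  rw [← enorm_eq_nnnorm, ← ofReal_norm, mul_assoc, ← Real.exp_add]
  refine ENNReal.ofReal_le_ofReal (le_mul_of_one_le_right (norm_nonneg _) (Real.one_le_exp ?_))
  nlinarith

lemma locFinite (h : HasSubexponentialGrowth ν.mass) : ν.locFinite :=
  fun r => (h.var_ball_le one_pos r).trans_lt ENNReal.ofReal_lt_top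

lemma eventually_var_ball_le (h : HasSubexponentialGrowth ν.mass) {ε : ℝ} (hε : 0 < ε) :
    ∀ᶠ r : ℝ in atTop, ν.var (ball 0 r) ≤ ENNReal.ofReal (Real.exp (ε * r)) := by
  have hexp : Tendsto (fun r : ℝ => Real.exp (ε / 2 * r)) atTop atTop :=
    Real.tendsto_exp_atTop.comp (tendsto_id.const_mul_atTop (by positivity))
  filter_upwards [hexp.eventually_ge_atTop (∑' γ, ‖ν.mass γ‖ * Real.exp (-(ε / 2 * |γ|)))]
    with r hr
  refine (h.var_ball_le (half_pos hε) r).trans (ENNReal.ofReal_le_ofReal ?_)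
  calc _ ≤ Real.exp (ε / 2 * r) * Real.exp (ε / 2 * r) := by gcongr
    _ = Real.exp (ε * r) := by rw [← Real.exp_add]; ring_nf

end HasSubexponentialGrowth

/-- If `c` are the coefficients of a logarithmic derivative `L` in the upper half-plane and `e`
those of `z ↦ -L (-z)`, so that `γ ↦ -e (-γ)` are the coefficients of `L` in the lower half-plane,
these are the coefficients of `(2πi)⁻¹` times the jump of `L` across the real axis. -/
def jumpCoeff (c e : ℝ → ℂ) (γ : ℝ) : ℂ := (2 * Real.pi * I)⁻¹ * (-e (-γ) - c γ)

lemma norm_jumpCoeff_le (c e : ℝ → ℂ) (γ : ℝ) : ‖jumpCoeff c e γ‖ ≤ ‖e (-γ)‖ + ‖c γ‖ := by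
  have hpi : ‖(2 * Real.pi * I)⁻¹‖ ≤ 1 := by
    rw [norm_inv, ← mul_one (2 * Real.pi * I), ← ofReal_one, norm_two_pi_I_mul, abs_one, mul_one]
    exact inv_le_one_of_one_le₀ (by linarith [Real.pi_gt_three])
  calc ‖jumpCoeff c e γ‖ ≤ 1 * ‖-e (-γ) - c γ‖ := by
        rw [jumpCoeff, norm_mul]
        gcongr
    _ ≤ ‖e (-γ)‖ + ‖c γ‖ := by
        rw [one_mul, ← norm_neg (e (-γ))]
        exact norm_sub_le _ _

namespace HasExpansionAbove

variable {c e : ℝ → ℂ} {F G : ℂ → ℂ}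

lemma hasSubexponentialGrowth (h : HasExpansionAbove c F 0) : HasSubexponentialGrowth c := by
  intro s hs
  have him : 0 < ((s / (2 * Real.pi) : ℝ) * I).im := by
    rw [im_ofReal_mul, I_im]
    positivity
  refine (h.summable_norm _ him).congr fun γ => ?_
  rw [norm_mul, norm_wave]
  rcases lt_or_ge γ 0 with hγ | hγ
  · simp [h.eq_zero_of_neg γ hγ]
  · rw [abs_of_nonneg hγ, im_ofReal_mul, I_im]
    field_simp

lemma hasSubexponentialGrowth_jumpCoeff (hc : HasExpansionAbove c F 0)
    (he : HasExpansionAbove e G 0) :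
    HasSubexponentialGrowth (jumpCoeff c e) := by
  intro s hs
  have he' : Summable fun γ => ‖e (-γ)‖ * Real.exp (-(s * |γ|)) := by
    simpa only [Function.comp_def, Equiv.neg_apply, abs_neg] using
      (Equiv.neg ℝ).summable_iff.2 (he.hasSubexponentialGrowth s hs)
  refine .of_nonneg_of_le (fun γ => by positivity) (fun γ => ?_)
    (he'.add (hc.hasSubexponentialGrowth s hs))
  rw [← add_mul]
  gcongr
  exact norm_jumpCoeff_le c e γ

lemma summable_norm_jumpCoeff_div (hc : HasExpansionAbove c F 0) (he : HasExpansionAbove e G 0) :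
    Summable fun γ : Set.Ioo (0 : ℝ) 1 => ‖jumpCoeff c e γ‖ / (γ : ℝ) := by
  refine .of_nonneg_of_le (fun γ => div_nonneg (norm_nonneg _) γ.2.1.le) (fun γ => ?_)
    hc.summable_div
  have hle := norm_jumpCoeff_le c e γ
  rw [he.eq_zero_of_neg _ (neg_neg_of_pos γ.2.1), norm_zero, zero_add] at hle
  exact div_le_div_of_nonneg_right hle γ.2.1.le

lemma hasSum_neg (he : HasExpansionAbove e G 0) {z : ℂ} (hz : z.im < 0) :
    HasSum (fun γ => -e (-γ) * wave γ z) (-G (-z)) := by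
  refine ((Equiv.neg ℝ).hasSum_iff.2 (he.hasSum (-z) (by simpa using hz)).neg).congr_fun
    fun γ => ?_
  simp [← wave_neg_left_eq_neg_right]

lemma summable_norm_neg (he : HasExpansionAbove e G 0) {z : ℂ} (hz : z.im < 0) :
    Summable fun γ => ‖-e (-γ) * wave γ z‖ := by
  refine ((Equiv.neg ℝ).summable_iff.2 (he.summable_norm (-z) (by simpa using hz))).congr
    fun γ => ?_
  simp [← wave_neg_left_eq_neg_right]

end HasExpansionAbove

namespace HasBoundedSpectrum

variable {a : ℝ → ℂ} {M : ℝ}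

lemma hasSum_jumpCoeff_mul (h : HasBoundedSpectrum a M) (hne : ∃ γ, a γ ≠ 0)
    (hreal : ∀ z, dirichletSum a z = 0 → z.im = 0) {k : ℝ → ℕ}
    (hk : HasRealZeroOrders (dirichletSum a) k) {c e : ℝ → ℂ}
    (hc : HasExpansionAbove c (logDeriv (dirichletSum a)) 0)
    (he : HasExpansionAbove e (logDeriv (dirichletSum fun γ => a (-γ))) 0) {φ : ℝ → ℂ}
    (hφ : ContDiff ℝ 2 φ) (hsupp : HasCompactSupport φ) :
    HasSum (fun γ => jumpCoeff c e γ * φ γ) (∑' x : ℝ, k x * fourierLaplace φ x) := by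
  have hupper := hasSum_coeff_mul_of_horizontal hφ hsupp (s := 1) (by simp)
    (hc.summable_norm _ (by simp)) fun x => hc.hasSum _ (by simp)
  have hlower := hasSum_coeff_mul_of_horizontal hφ hsupp (s := -1) (by simp)
    (he.summable_norm_neg (by simp)) (F := logDeriv (dirichletSum a)) fun x => by
      simpa only [logDeriv_dirichletSum_comp_neg, neg_neg] using
        he.hasSum_neg (z := x + (-1 : ℝ) * I) (by simp)
  obtain ⟨C, hC⟩ := exists_isStripTest_fourierLaplace hφ hsupp
  have hzeros := h.tsum_zeros_mul hne hreal hk hC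
  simp only [ofReal_neg, ofReal_one, neg_mul, one_mul, ← sub_eq_add_neg] at hupper hlower
  have hjump := (hlower.sub hupper).mul_left (2 * Real.pi * I : ℂ)⁻¹
  rw [← hzeros, inv_mul_cancel_left₀ two_pi_I_ne_zero] at hjump
  refine hjump.congr_fun fun γ => ?_
  rw [jumpCoeff]
  ring

theorem exists_hasSum_fourierLaplace_zeros (h : HasBoundedSpectrum a M) (hne : ∃ γ, a γ ≠ 0)
    (hreal : ∀ z, dirichletSum a z = 0 → z.im = 0) {k : ℝ → ℕ}
    (hk : HasRealZeroOrders (dirichletSum a) k) :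
    ∃ b : ℝ → ℂ, HasSubexponentialGrowth b ∧
      (Summable fun γ : Set.Ioo (0 : ℝ) 1 => ‖b γ‖ / (γ : ℝ)) ∧
      ∀ φ : ℝ → ℂ, ContDiff ℝ 2 φ → HasCompactSupport φ →
        HasSum (fun γ => b γ * φ γ) (∑' x : ℝ, k x * fourierLaplace φ x) := by
  obtain ⟨c, hc⟩ := h.exists_hasExpansionAbove_zero hne fun z hz h0 => hz.ne' (hreal z h0)
  obtain ⟨e, he⟩ := h.comp_neg.exists_hasExpansionAbove_zero (exists_comp_neg_ne_zero hne)
    fun z hz => dirichletSum_comp_neg_ne_zero (fun w hw h0 => hw.ne (hreal w h0)) hz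
  exact ⟨jumpCoeff c e, hc.hasSubexponentialGrowth_jumpCoeff he, hc.summable_norm_jumpCoeff_div he,
    fun φ hφ hsupp => h.hasSum_jumpCoeff_mul hne hreal hk hc he hφ hsupp⟩

end HasBoundedSpectrum

lemma exists_dserC_eq_dirichletSum {q : ℕ → ℂ} {ω : ℕ → ℝ} (hq : Summable fun i => ‖q i‖)
    (hω : IsBounded (Set.range ω)) :
    ∃ a M, HasBoundedSpectrum a M ∧ dserC q ω = dirichletSum a := by
  obtain ⟨M, hM⟩ := hω.exists_norm_le
  have hωM (i : ℕ) : |ω i| ≤ M := hM (ω i) (Set.mem_range_self i)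
  obtain ⟨a, haM, ha, hcollect⟩ := exists_hasSum_collect (S := {γ | |γ| ≤ M}) hωM hq
  refine ⟨a, M, ⟨ha, haM⟩, funext fun z => ?_⟩
  have hsum : Summable fun i => q i * wave (ω i) z := by
    refine .of_norm_bounded (hq.mul_right (Real.exp (2 * Real.pi * M * |z.im|))) fun i => ?_
    rw [norm_mul]
    exact mul_le_mul_of_nonneg_left (norm_wave_le_exp (hωM i) le_rfl) (norm_nonneg _)
  exact (hcollect (wave · z) _ hsum.hasSum).tsum_eq.symm

lemma exists_coeff_ne_zero {a : ℝ → ℂ} {z : ℂ} (hz : dirichletSum a z ≠ 0) : ∃ γ, a γ ≠ 0 := by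
  contrapose! hz
  simp [dirichletSum, hz]

lemma IsZeroCounting.exists_hasRealZeroOrders {Q : ℂ → ℂ} {μ : PPM ℝ} (h : IsZeroCounting Q μ) :
    ∃ k : ℝ → ℕ, HasRealZeroOrders Q k ∧ ∀ x, μ.mass x = k x := by
  choose k g hmass hg hgx hQ using h
  exact ⟨k, fun x => ⟨g x, fun z => (hg x z).differentiableAt, hgx x, hQ x⟩, hmass⟩

lemma exists_norm_schwartz_le (φ : 𝓢(ℝ, ℂ)) : ∃ C : ℝ, ∀ x, ‖φ x‖ ≤ C * (1 + x ^ 2)⁻¹ := by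
  obtain ⟨C₀, -, h₀⟩ := φ.decay 0 0
  obtain ⟨C₂, -, h₂⟩ := φ.decay 2 0
  refine ⟨C₀ + C₂, fun x => ?_⟩
  have hx₀ : ‖φ x‖ ≤ C₀ := by simpa using h₀ x
  have hx₂ : x ^ 2 * ‖φ x‖ ≤ C₂ := by simpa using h₂ x
  rw [← div_eq_mul_inv, le_div_iff₀ (by positivity)]
  linarith

lemma tsum_nnnorm_div_lt_top {b : ℝ → ℂ}
    (hb : Summable fun γ : Set.Ioo (0 : ℝ) 1 => ‖b γ‖ / (γ : ℝ)) :
    ∑' γ : Set.Ioo (0 : ℝ) 1, (‖b γ‖₊ : ℝ≥0∞) / ENNReal.ofReal (γ : ℝ) < ⊤ := by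
  refine lt_of_eq_of_lt (tsum_congr fun γ => ?_) hb.tsum_ofReal_lt_top
  rw [ENNReal.ofReal_div_of_pos γ.2.1, ofReal_norm, enorm_eq_nnnorm]

lemma isFT_of_hasSum_fourierLaplace {μ ν : PPM ℝ}
    (h : ∀ φ : 𝓢(ℝ, ℂ), HasCompactSupport φ →
      HasSum (fun γ => ν.mass γ * φ γ) (∑' x : ℝ, μ.mass x * fourierLaplace φ x)) :
    IsFT μ ν := by
  intro φ hφ
  refine Eq.trans (tsum_congr fun x => ?_) (h φ hφ).tsum_eq.symm
  rw [FourierTransform.fourierCLE_apply, SchwartzMap.fourier_coe, fourier_eq_fourierLaplace]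

/-- **necessity in Theorem 5.** Let `Q(z) = Σ_{ω∈Ω} q_ω e^{2πi z ω}` be a
Dirichlet series with `Σ|q_ω| < ∞` and bounded countable spectrum, not identically zero,
with only real zeros, and let `μ_A` be the counting measure of its zero multiset `A`
(zeros with multiplicities). Then `μ_A` is temperate and its Fourier transform is a pure
point measure `μ̂_A = Σ_γ b_γ δ_γ` satisfying `Σ_{0<γ<1} |b_γ|/γ < ∞` and
`log |μ̂_A|(B(0,r)) = o(r)` as `r → ∞`. -/
theorem statement8 (q : ℕ → ℂ) (ω : ℕ → ℝ)
    (hq : Summable fun i => ‖q i‖) (hω : IsBounded (Set.range ω))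
    (hne : ∃ z : ℂ, dserC q ω z ≠ 0)
    (hreal : ∀ z : ℂ, dserC q ω z = 0 → z.im = 0)
    (μ : PPM ℝ) (hμ : IsZeroCounting (dserC q ω) μ) :
    μ.temperate ∧
    ∃ νh : PPM ℝ, IsFT μ νh ∧ νh.locFinite ∧
      (∑' γ : (Set.Ioo (0:ℝ) 1), (‖νh.mass γ‖₊ : ℝ≥0∞) / ENNReal.ofReal (γ : ℝ) < ⊤) ∧
      (∀ ε : ℝ, 0 < ε → ∀ᶠ r : ℝ in atTop,
        νh.var (ball (0:ℝ) r) ≤ ENNReal.ofReal (Real.exp (ε * r))) := by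
  obtain ⟨a, M, ha, hQ⟩ := exists_dserC_eq_dirichletSum hq hω
  rw [hQ] at hne hreal hμ
  obtain ⟨k, hk, hmass⟩ := hμ.exists_hasRealZeroOrders
  have hne' : ∃ γ, a γ ≠ 0 := hne.elim fun _ => exists_coeff_ne_zero
  obtain ⟨b, hgrowth, hdiv, hb⟩ := ha.exists_hasSum_fourierLaplace_zeros hne' hreal hk
  have htemp : μ.temperate := fun φ => by
    obtain ⟨C, hC⟩ := exists_norm_schwartz_le φ
    simpa only [hmass] using ha.summable_zeros_mul hne' hreal hk hC
  let ν : PPM ℝ := ⟨b, hgrowth.countable_support⟩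
  have hν : HasSubexponentialGrowth ν.mass := hgrowth
  have hFT : IsFT μ ν := isFT_of_hasSum_fourierLaplace fun φ hφ => by
    simpa only [hmass] using hb φ (φ.smooth 2) hφ
  exact ⟨htemp, ν, hFT, hν.locFinite, tsum_nnnorm_div_lt_top hdiv,
    fun ε hε => hν.eventually_var_ball_le hε⟩

end
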